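/- Let A be a unital C*-algebra of stable rank one (not assumed separable) and let k ∈ ℕ with k ≥ 1. Then A has no nonzero representation of dimension less than k if and only if there exists a *-homomorphism φ : M_k(C_0((0,1])) → A whose range generates A as a closed two-sided ideal (i.e., φ has full range). -/

import Mathlib

open ZeroAtInfty

/-!
Let `J` be a maximal ideal and let `m` be the largest number of nonzero pairwise orthogonal
self-adjoint elements of `A / J`. If `m` is finite, such a family can be chosen to consist of
minimal projections with sum `1`, and `A / J` is a matrix algebra of size `m`. Hence if `A` has no
nonzero representation of dimension less than `k`, every quotient `A / J` contains `k` such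
elements, and these lift to orthogonal elements of `A` that remain nonzero modulo nearby maximal
ideals. As `1` lies in a finitely generated ideal, finitely many such families suffice. Density of
the invertible elements provides unitaries that move one full element under another while fixing
an orthogonal one; with them the local families are glued to `k` orthogonal full elements of `A`,
and these are made pairwise equivalent, which yields a full homomorphism from the cone over `M_k`.

Conversely, a homomorphism from `M_k(B)` to `M_j(ℂ)` with `j < k` vanishes, because there is no
room in `ℂ^j` for `k` orthogonal equivalent nonzero ranges. So the kernel of a representation of
dimension `j` is a closed ideal that contains the range of every homomorphism `M_k(B) → A`.
-/

namespace GlimmHalving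

open Filter Topology

section Ring

variable {R : Type*} [Ring R]

lemma exists_finset_mem_span {s : Set R} {x : R} (hx : x ∈ TwoSidedIdeal.span s) :
    ∃ t : Finset R, ↑t ⊆ s ∧ x ∈ TwoSidedIdeal.span (t : Set R) := by
  classical
  induction hx using TwoSidedIdeal.span_induction with
  | mem x hx => exact ⟨{x}, by simpa using hx, TwoSidedIdeal.subset_span (by simp)⟩
  | zero => exact ⟨∅, by simp, zero_mem _⟩
  | add x y _ _ ihx ihy =>
    obtain ⟨t, hts, hxt⟩ := ihx
    obtain ⟨t', hts', hyt'⟩ := ihy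
    refine ⟨t ∪ t', by simp [hts, hts'], add_mem ?_ ?_⟩
    · exact TwoSidedIdeal.span_mono (by simp) hxt
    · exact TwoSidedIdeal.span_mono (by simp) hyt'
  | neg x _ ih => exact ih.imp fun _ h => ⟨h.1, neg_mem h.2⟩
  | left_absorb a x _ ih => exact ih.imp fun _ h => ⟨h.1, TwoSidedIdeal.mul_mem_left _ _ _ h.2⟩
  | right_absorb a x _ ih => exact ih.imp fun _ h => ⟨h.1, TwoSidedIdeal.mul_mem_right _ _ _ h.2⟩

lemma isCompactElement_top : IsCompactElement (⊤ : TwoSidedIdeal R) := by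
  rw [CompleteLattice.isCompactElement_iff_le_of_directed_sSup_le]
  intro s hs hdir htop
  have hle : sSup s ≤ TwoSidedIdeal.span (⋃ J ∈ s, (J : Set R)) :=
    sSup_le fun J hJ => fun x hx => TwoSidedIdeal.subset_span (Set.mem_biUnion hJ hx)
  have h1s : (1 : R) ∈ sSup s := htop (TwoSidedIdeal.mem_top R)
  obtain ⟨t, hts, h1t⟩ := exists_finset_mem_span (hle h1s)
  obtain ⟨J, hJ, htJ⟩ := DirectedOn.exists_mem_subset_of_finset_subset_biUnion hs
    (fun I hI J hJ => hdir I hI J hJ) hts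
  exact ⟨J, hJ, ((TwoSidedIdeal.one_mem_iff J).1 (TwoSidedIdeal.mem_span_iff.1 h1t J htJ)).ge⟩

instance : IsCoatomic (TwoSidedIdeal R) :=
  CompleteLattice.coatomic_of_top_compact isCompactElement_top

variable {J : TwoSidedIdeal R}

lemma one_notMem_of_isCoatom (hJ : IsCoatom J) : (1 : R) ∉ J :=
  fun h => hJ.1 ((TwoSidedIdeal.one_mem_iff J).1 h)

lemma eq_top_of_isUnit_mem {u : R} (hu : IsUnit u) (huJ : u ∈ J) : J = ⊤ := by
  obtain ⟨v, rfl⟩ := hu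
  exact (TwoSidedIdeal.one_mem_iff J).1 (by simpa using J.mul_mem_left ↑v⁻¹ _ huJ)

lemma span_eq_top_iff {s : Set R} :
    TwoSidedIdeal.span s = ⊤ ↔ ∀ J : TwoSidedIdeal R, IsCoatom J → ∃ x ∈ s, x ∉ J := by
  refine ⟨fun hs J hJ => ?_, fun h => ?_⟩
  · by_contra! hsJ
    exact hJ.1 (top_le_iff.1 (hs ▸ TwoSidedIdeal.span_le.2 hsJ))
  · obtain hs | ⟨J, hJ, hle⟩ := eq_top_or_exists_le_coatom (TwoSidedIdeal.span s)
    · exact hs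
    · obtain ⟨x, hxs, hxJ⟩ := h J hJ
      exact (hxJ (hle (TwoSidedIdeal.subset_span hxs))).elim

lemma exists_finset_span_range_eq_top {ι : Type*} {y : ι → R}
    (hy : TwoSidedIdeal.span (Set.range y) = ⊤) :
    ∃ F : Finset ι, TwoSidedIdeal.span (Set.range fun i : F => y i) = ⊤ := by
  classical
  obtain ⟨t, hty, h1t⟩ := exists_finset_mem_span ((TwoSidedIdeal.one_mem_iff _).2 hy)
  obtain ⟨F, -, rfl⟩ := Finset.subset_set_image_iff.1 (Set.image_univ (f := y) ▸ hty)
  rw [Finset.coe_image, Set.image_eq_range] at h1t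
  exact ⟨F, (TwoSidedIdeal.one_mem_iff _).1 h1t⟩

lemma exists_mul_mul_notMem (hJ : IsCoatom J) {a b : R} (ha : a ∉ J) (hb : b ∉ J) :
    ∃ t, a * t * b ∉ J := by
  by_contra! hab
  let K : TwoSidedIdeal R := .mk' {x | ∀ t, x * t * b ∈ J}
    (fun t => by simp [J.zero_mem])
    (fun {x y} hx hy t => by simpa only [add_mul] using J.add_mem (hx t) (hy t))
    (fun {x} hx t => by simpa only [neg_mul] using J.neg_mem (hx t))
    (fun {x y} hy t => by simpa only [mul_assoc] using J.mul_mem_left x _ (hy t))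
    (fun {x y} hx t => by simpa only [mul_assoc] using hx (y * t))
  have mem_K (x : R) : x ∈ K ↔ ∀ t, x * t * b ∈ J := by simp [K, TwoSidedIdeal.mem_mk']
  have hJK : J ≤ K := fun x hx =>
    (mem_K x).2 fun t => J.mul_mem_right _ _ (J.mul_mem_right _ _ hx)
  have h1K : (1 : R) ∈ K :=
    (TwoSidedIdeal.one_mem_iff K).2
      (hJ.2 K (lt_of_le_of_ne hJK fun h => ha (h ▸ (mem_K a).2 hab)))
  exact hb (by simpa using (mem_K 1).1 h1K 1)

lemma exists_notMem_forall_mem_span (hJ : IsCoatom J) {ι : Type*} (s : Finset ι) {a : ι → R}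
    (ha : ∀ i ∈ s, a i ∉ J) :
    ∃ y ∉ J, ∀ i ∈ s, y ∈ TwoSidedIdeal.span {a i} := by
  classical
  induction s using Finset.induction_on with
  | empty => exact ⟨1, one_notMem_of_isCoatom hJ, by simp⟩
  | insert i s _ ih =>
    rw [Finset.forall_mem_insert] at ha
    obtain ⟨y, hy, hys⟩ := ih ha.2
    obtain ⟨t, ht⟩ := exists_mul_mul_notMem hJ ha.1 hy
    refine ⟨a i * t * y, ht, Finset.forall_mem_insert .. |>.2 ⟨?_, fun j hj => ?_⟩⟩
    · rw [mul_assoc]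
      exact TwoSidedIdeal.mul_mem_right _ _ _ (TwoSidedIdeal.subset_span rfl)
    · exact TwoSidedIdeal.mul_mem_left _ _ _ (hys j hj)

lemma exists_finset_forall_notMem {ι : Type*} [Finite ι]
    (b : {J : TwoSidedIdeal R // IsCoatom J} → ι → R) (hb : ∀ J i, b J i ∉ J.1) :
    ∃ F : Finset {J : TwoSidedIdeal R // IsCoatom J},
      ∀ J' : TwoSidedIdeal R, IsCoatom J' → ∃ J ∈ F, ∀ i, b J i ∉ J' := by
  have := Fintype.ofFinite ι
  have hprime (J : {J : TwoSidedIdeal R // IsCoatom J}) :=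
    exists_notMem_forall_mem_span J.2 Finset.univ fun i _ => hb J i
  choose y hyJ hy using hprime
  have hy_top : TwoSidedIdeal.span (Set.range y) = ⊤ :=
    span_eq_top_iff.2 fun J hJ => ⟨y ⟨J, hJ⟩, ⟨_, rfl⟩, hyJ _⟩
  obtain ⟨F, hF⟩ := exists_finset_span_range_eq_top hy_top
  refine ⟨F, fun J' hJ' => ?_⟩
  obtain ⟨_, ⟨J, rfl⟩, hJ⟩ := span_eq_top_iff.1 hF J' hJ'
  exact ⟨J, J.2, fun i hi => hJ
    (TwoSidedIdeal.span_le.2 (Set.singleton_subset_iff.2 hi) (hy J i (Finset.mem_univ i)))⟩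

lemma smul_mem_of_mem {𝕜 : Type*} [CommSemiring 𝕜] [Algebra 𝕜 R] (c : 𝕜) {x : R} (hx : x ∈ J) :
    c • x ∈ J := by
  rw [Algebra.smul_def]
  exact J.mul_mem_left _ _ hx

/-- An element is full if it generates the whole ring as a two-sided ideal. -/
def IsFull (x : R) : Prop := TwoSidedIdeal.span {x} = ⊤

lemma isFull_iff {x : R} : IsFull x ↔ ∀ J : TwoSidedIdeal R, IsCoatom J → x ∉ J := by
  simp only [IsFull, span_eq_top_iff, Set.mem_singleton_iff, exists_eq_left]

lemma isFull_one : IsFull (1 : R) :=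
  isFull_iff.2 fun _ => one_notMem_of_isCoatom

lemma IsFull.of_mem_span {x y : R} (hx : IsFull x) (hxy : x ∈ TwoSidedIdeal.span {y}) :
    IsFull y :=
  top_le_iff.1 (hx.symm.trans_le (TwoSidedIdeal.span_le.2 (by simpa using hxy)))

lemma IsFull.of_mul_left {x y : R} (hxy : IsFull (x * y)) : IsFull y :=
  hxy.of_mem_span (TwoSidedIdeal.mul_mem_left _ _ _ (TwoSidedIdeal.subset_span rfl))

end Ring

lemma exists_continuous_mem_span {R ι : Type*} [Ring R] [TopologicalSpace R] [IsTopologicalRing R]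
    {y : ι → R} {x : R} (hx : x ∈ TwoSidedIdeal.span (Set.range y)) :
    ∃ Φ : (ι → R) → R, Continuous Φ ∧ Φ y = x ∧ ∀ z, Φ z ∈ TwoSidedIdeal.span (Set.range z) := by
  induction hx using TwoSidedIdeal.span_induction with
  | mem x hx =>
    obtain ⟨i, rfl⟩ := hx
    exact ⟨fun z => z i, continuous_apply i, rfl,
      fun z => TwoSidedIdeal.subset_span (Set.mem_range_self i)⟩
  | zero => exact ⟨fun _ => 0, continuous_const, rfl, fun _ => zero_mem _⟩
  | add a b _ _ iha ihb =>
    obtain ⟨Φ, hΦ, rfl, hΦmem⟩ := iha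
    obtain ⟨Ψ, hΨ, rfl, hΨmem⟩ := ihb
    exact ⟨fun z => Φ z + Ψ z, hΦ.add hΨ, rfl, fun z => add_mem (hΦmem z) (hΨmem z)⟩
  | neg a _ ih =>
    obtain ⟨Φ, hΦ, rfl, hmem⟩ := ih
    exact ⟨fun z => -Φ z, hΦ.neg, rfl, fun z => neg_mem (hmem z)⟩
  | left_absorb a b _ ih =>
    obtain ⟨Φ, hΦ, rfl, hmem⟩ := ih
    exact ⟨fun z => a * Φ z, hΦ.const_mul a, rfl,
      fun z => TwoSidedIdeal.mul_mem_left _ _ _ (hmem z)⟩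
  | right_absorb b a _ ih =>
    obtain ⟨Φ, hΦ, rfl, hmem⟩ := ih
    exact ⟨fun z => Φ z * b, hΦ.mul_const b, rfl,
      fun z => TwoSidedIdeal.mul_mem_right _ _ _ (hmem z)⟩

section NormedRing

variable {R : Type*} [NormedRing R] [HasSummableGeomSeries R]

lemma isOpen_setOf_span_range_eq_top (ι : Type*) :
    IsOpen {y : ι → R | TwoSidedIdeal.span (Set.range y) = ⊤} := by
  rw [isOpen_iff_mem_nhds]
  intro y hy
  obtain ⟨Φ, hΦ, hΦy, hmem⟩ := exists_continuous_mem_span ((TwoSidedIdeal.one_mem_iff _).2 hy)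
  have hunit : {u : R | IsUnit u} ∈ 𝓝 (Φ y) := Units.isOpen.mem_nhds (hΦy ▸ isUnit_one)
  filter_upwards [hΦ.continuousAt hunit] with z hz
  exact eq_top_of_isUnit_mem hz (hmem z)

lemma isOpen_setOf_isFull : IsOpen {x : R | IsFull x} := by
  have := (isOpen_setOf_span_range_eq_top (R := R) Unit).preimage
    (continuous_pi fun _ => continuous_id : Continuous fun (x : R) (_ : Unit) => x)
  simpa [IsFull, Set.range_const] using this

lemma isClosed_of_isCoatom {J : TwoSidedIdeal R} (hJ : IsCoatom J) : IsClosed (J : Set R) := by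
  let K : TwoSidedIdeal R := .mk' (closure J) (subset_closure J.zero_mem)
    (fun hx hy => map_mem_closure₂ continuous_add hx hy fun _ ha _ hb => J.add_mem ha hb)
    (fun hx => map_mem_closure continuous_neg hx fun _ ha => J.neg_mem ha)
    (fun {x _} hy => map_mem_closure (continuous_const_mul x) hy fun _ => J.mul_mem_left _ _)
    (fun {_ y} hx => map_mem_closure (f := (· * y)) (continuous_mul_const y) hx
      fun _ => J.mul_mem_right _ _)
  have mem_K (x : R) : x ∈ K ↔ x ∈ closure (J : Set R) := TwoSidedIdeal.mem_mk' ..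
  have hK : K ≠ ⊤ := fun h => by
    have h1 : (1 : R) ∈ closure (J : Set R) := (mem_K 1).1 ((TwoSidedIdeal.one_mem_iff K).2 h)
    obtain ⟨u, hu, huJ⟩ := mem_closure_iff_nhds.1 h1 _ (Units.isOpen.mem_nhds isUnit_one)
    exact hJ.1 (eq_top_of_isUnit_mem hu huJ)
  have hJK : J ≤ K := fun x hx => (mem_K x).2 (subset_closure hx)
  refine closure_subset_iff_isClosed.1 fun x hx => ?_
  rw [hJ.le_iff.1 hJK |>.resolve_left hK |>.symm]
  exact (mem_K x).2 hx

end NormedRing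

section Ramp

/-- The piecewise linear cutoff function that vanishes for `t ≤ (n + 1) * d` and is `1` for
`(n + 2) * d ≤ t`. -/
noncomputable def ramp (d : ℝ) (n : ℕ) (t : ℝ) : ℝ := max 0 (min 1 (t / d - n - 1))

variable {d t : ℝ} {i j n : ℕ}

@[fun_prop]
lemma continuous_ramp : Continuous (ramp d n) := by unfold ramp; fun_prop

lemma ramp_nonneg : 0 ≤ ramp d n t := le_max_left _ _

lemma ramp_le_one : ramp d n t ≤ 1 := max_le zero_le_one (min_le_left _ _)

lemma ramp_eq_zero (hd : 0 < d) (ht : t ≤ (n + 1) * d) : ramp d n t = 0 := by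
  have : t / d ≤ n + 1 := (div_le_iff₀ hd).2 ht
  exact max_eq_left ((min_le_right _ _).trans (by linarith))

lemma ramp_eq_one (hd : 0 < d) (ht : (n + 2) * d ≤ t) : ramp d n t = 1 := by
  have : n + 2 ≤ t / d := (le_div_iff₀ hd).2 ht
  rw [ramp, min_eq_left (by linarith), max_eq_right zero_le_one]

lemma ramp_mul_ramp (hd : 0 < d) (hij : i < j) : ramp d i t * ramp d j t = ramp d j t := by
  obtain ht | ht := le_total t ((j + 1) * d)
  · rw [ramp_eq_zero hd ht, mul_zero]
  · have hij' : (i : ℝ) + 1 ≤ j := by exact_mod_cast hij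
    rw [ramp_eq_one hd (ht.trans' (by nlinarith)), one_mul]

lemma mul_inv_max_mul_ramp (hd : 0 < d) : t * ((max t d)⁻¹ * ramp d n t) = ramp d n t := by
  obtain ht | ht := le_total t d
  · rw [ramp_eq_zero hd (ht.trans (le_mul_of_one_le_left hd.le (by simp)))]
    simp
  · rw [max_eq_left ht, ← mul_assoc, mul_inv_cancel₀ (hd.trans_le ht).ne', one_mul]

lemma one_sub_ramp_sq_mul_le (hd : 0 < d) (ht : 0 ≤ t) :
    (1 - ramp d n t) * t * (1 - ramp d n t) ≤ (n + 2) * d := by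
  obtain htd | htd := le_total ((n + 2) * d) t
  · rw [ramp_eq_one hd htd]
    nlinarith
  · have h0 : 0 ≤ 1 - ramp d n t := sub_nonneg.2 ramp_le_one
    have h1 : 1 - ramp d n t ≤ 1 := sub_le_self _ ramp_nonneg
    calc (1 - ramp d n t) * t * (1 - ramp d n t) ≤ 1 * t * 1 := by gcongr
      _ ≤ (n + 2) * d := by linarith

end Ramp

section Cutoff

variable {A : Type*} [CStarAlgebra A]

/-- The cutoff `ramp d n` applied to `h`. For a positive `h`, `d > 0` and `n = 0, 1, 2, …` these
are decreasing positive contractions, each acting as a unit on the next one. -/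
noncomputable def cutoff (d : ℝ) (n : ℕ) (h : A) : A := cfc (ramp d n) h

/-- The function `t ↦ 1 / √t`, made constant for `t ≤ d`, applied to `h`. -/
noncomputable def truncInvSqrt (d : ℝ) (h : A) : A := cfc (fun t : ℝ => (√(max t d))⁻¹) h

variable {d : ℝ} {i j n : ℕ} {b h : A}

lemma isSelfAdjoint_cutoff : IsSelfAdjoint (cutoff d n h) := IsSelfAdjoint.cfc

lemma isSelfAdjoint_truncInvSqrt : IsSelfAdjoint (truncInvSqrt d h) := IsSelfAdjoint.cfc

lemma commute_cutoff (hb : Commute h b) : Commute (cutoff d n h) b := hb.cfc_real _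

lemma commute_truncInvSqrt (hb : Commute h b) : Commute (truncInvSqrt d h) b := hb.cfc_real _

lemma cutoff_mul_cutoff_of_lt (hd : 0 < d) (hij : i < j) :
    cutoff d i h * cutoff d j h = cutoff d j h := by
  rw [cutoff, cutoff, ← cfc_mul ..]
  exact cfc_congr fun t _ => ramp_mul_ramp hd hij

lemma cutoff_mul_cutoff_of_gt (hd : 0 < d) (hij : i < j) :
    cutoff d j h * cutoff d i h = cutoff d j h := by
  rw [(commute_cutoff (commute_cutoff (Commute.refl h)).symm).eq, cutoff_mul_cutoff_of_lt hd hij]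

lemma dvd_cutoff (hd : 0 < d) (hh : IsSelfAdjoint h) : h ∣ cutoff d n h := by
  have hcont : Continuous fun t : ℝ => (max t d)⁻¹ * ramp d n t :=
    (Continuous.inv₀ (by fun_prop) fun t => (lt_max_of_lt_right hd).ne').mul continuous_ramp
  refine ⟨cfc (fun t : ℝ => (max t d)⁻¹ * ramp d n t) h, ?_⟩
  nth_rewrite 2 [← cfc_id ℝ h]
  rw [← cfc_mul _ _ h continuousOn_id hcont.continuousOn]
  exact cfc_congr fun t _ => (mul_inv_max_mul_ramp hd).symm

lemma mul_cutoff_eq_zero (hd : 0 < d) (hh : IsSelfAdjoint h) (hb : b * h = 0) :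
    b * cutoff d n h = 0 := by
  obtain ⟨w, hw⟩ := dvd_cutoff (n := n) hd hh
  rw [hw, ← mul_assoc, hb, zero_mul]

lemma cutoff_mul_eq_zero (hd : 0 < d) (hh : IsSelfAdjoint h) (hb : h * b = 0) :
    cutoff d n h * b = 0 := by
  have hstar : star b * h = 0 := by simpa [hh.star_eq] using congrArg star hb
  simpa [isSelfAdjoint_cutoff.star_eq] using
    congrArg star (mul_cutoff_eq_zero (n := n) hd hh hstar)

lemma truncInvSqrt_mul_mul_truncInvSqrt_mul_cutoff (hd : 0 < d) (hh : IsSelfAdjoint h) :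
    truncInvSqrt d h * h * truncInvSqrt d h * cutoff d n h = cutoff d n h := by
  have hpos (t : ℝ) : 0 < max t d := lt_max_of_lt_right hd
  have hcont : Continuous fun t : ℝ => (√(max t d))⁻¹ :=
    Continuous.inv₀ (by fun_prop) fun t => (Real.sqrt_pos.2 (hpos t)).ne'
  have hcont' : Continuous fun t : ℝ => (√(max t d))⁻¹ * id t := hcont.mul continuous_id
  have hcont'' : Continuous fun t : ℝ => (√(max t d))⁻¹ * id t * (√(max t d))⁻¹ := hcont'.mul hcont
  nth_rewrite 2 [← cfc_id ℝ h]
  rw [truncInvSqrt, cutoff, ← cfc_mul _ _ h hcont.continuousOn continuousOn_id,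
    ← cfc_mul _ _ h hcont'.continuousOn hcont.continuousOn,
    ← cfc_mul _ _ h hcont''.continuousOn (by fun_prop)]
  refine cfc_congr fun t _ => ?_
  calc (√(max t d))⁻¹ * t * (√(max t d))⁻¹ * ramp d n t
      = t * ((√(max t d) * √(max t d))⁻¹ * ramp d n t) := by rw [mul_inv]; ring
    _ = ramp d n t := by
      rw [Real.mul_self_sqrt (hpos t).le, mul_inv_max_mul_ramp hd]

lemma norm_one_sub_cutoff_mul_mul_le (hd : 0 < d) (hh : IsSelfAdjoint h)
    (hpos : ∀ t ∈ spectrum ℝ h, 0 ≤ t) :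
    ‖(1 - cutoff d n h) * h * (1 - cutoff d n h)‖ ≤ (n + 2) * d := by
  have hsub : 1 - cutoff d n h = cfc (fun t : ℝ => 1 - ramp d n t) h := by
    rw [cfc_sub (fun _ => (1 : ℝ)) (ramp d n) h, cfc_const_one ℝ h, cutoff]
  have hcfc : (1 - cutoff d n h) * h * (1 - cutoff d n h)
      = cfc (fun t : ℝ => (1 - ramp d n t) * t * (1 - ramp d n t)) h := by
    rw [hsub]
    nth_rewrite 2 [← cfc_id ℝ h]
    rw [← cfc_mul .., ← cfc_mul ..]
    rfl
  rw [hcfc]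
  refine norm_cfc_le (by positivity) fun t ht => ?_
  have h0 : 0 ≤ 1 - ramp d n t := sub_nonneg.2 ramp_le_one
  have ht0 := hpos t ht
  rw [Real.norm_of_nonneg (by positivity)]
  exact one_sub_ramp_sq_mul_le hd ht0

lemma norm_sub_mul_cutoff_sq_le {ι : Type*} [Fintype ι] (x : ι → A) (hd : 0 < d) (i : ι) :
    ‖x i - x i * cutoff d n (∑ j, star (x j) * x j)‖ ^ 2 ≤ (n + 2) * d := by
  let _ := CStarAlgebra.spectralOrder A
  let _ := CStarAlgebra.spectralOrderedRing A
  set h := ∑ j, star (x j) * x j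
  have hh : 0 ≤ h := Finset.sum_nonneg fun j _ => star_mul_self_nonneg (x j)
  have hle : star (x i) * x i ≤ h :=
    Finset.single_le_sum (f := fun j => star (x j) * x j)
      (fun j _ => star_mul_self_nonneg (x j)) (Finset.mem_univ i)
  have hc : star (1 - cutoff d n h) = 1 - cutoff d n h := by
    rw [star_sub, star_one, isSelfAdjoint_cutoff.star_eq]
  have hconj : star (1 - cutoff d n h) * (star (x i) * x i) * (1 - cutoff d n h)
      ≤ star (1 - cutoff d n h) * h * (1 - cutoff d n h) :=
    star_left_conjugate_le_conjugate hle _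
  calc ‖x i - x i * cutoff d n h‖ ^ 2
      = ‖star (1 - cutoff d n h) * (star (x i) * x i) * (1 - cutoff d n h)‖ := by
        rw [sq, ← CStarRing.norm_star_mul_self, ← mul_one_sub, star_mul]
        simp only [mul_assoc]
    _ ≤ ‖star (1 - cutoff d n h) * h * (1 - cutoff d n h)‖ :=
        CStarAlgebra.norm_le_norm_of_nonneg_of_le
          (star_left_conjugate_nonneg (star_mul_self_nonneg (x i)) _) hconj
    _ ≤ (n + 2) * d := by
        rw [hc]
        exact norm_one_sub_cutoff_mul_mul_le hd hh.isSelfAdjoint fun t ht =>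
          spectrum_nonneg_of_nonneg hh ht

lemma tendsto_mul_cutoff_sum {ι : Type*} [Fintype ι] (x : ι → A) (i : ι) (n : ℕ) :
    Tendsto (fun d => x i * cutoff d n (∑ j, star (x j) * x j)) (𝓝[>] 0) (𝓝 (x i)) := by
  have hsqrt : Tendsto (fun d : ℝ => √((n + 2) * d)) (𝓝[>] 0) (𝓝 0) :=
    (Continuous.tendsto' (by fun_prop) 0 0 (by simp)).mono_left nhdsWithin_le_nhds
  rw [tendsto_iff_norm_sub_tendsto_zero]
  refine squeeze_zero' (.of_forall fun _ => norm_nonneg _) ?_ hsqrt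
  filter_upwards [self_mem_nhdsWithin] with d hd
  rw [norm_sub_rev]
  exact Real.le_sqrt_of_sq_le (norm_sub_mul_cutoff_sq_le x hd i)

lemma tendsto_mul_cutoff (z : A) (n : ℕ) :
    Tendsto (fun d => z * cutoff d n (star z * z)) (𝓝[>] 0) (𝓝 z) := by
  simpa using tendsto_mul_cutoff_sum (fun _ : Unit => z) () n

lemma tendsto_cutoff_mul (z : A) (n : ℕ) :
    Tendsto (fun d => cutoff d n (z * star z) * z) (𝓝[>] 0) (𝓝 z) := by
  simpa [isSelfAdjoint_cutoff.star_eq] using (tendsto_mul_cutoff (star z) n).star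

end Cutoff

section ClosedIdeal

variable {A : Type*} [CStarAlgebra A] {J : TwoSidedIdeal A}

lemma mem_of_sum_star_mul_self_mem (hJ : IsClosed (J : Set A)) {ι : Type*} [Fintype ι]
    {x : ι → A} (hx : ∑ j, star (x j) * x j ∈ J) (i : ι) : x i ∈ J := by
  refine hJ.mem_of_tendsto (tendsto_mul_cutoff_sum x i 0) ?_
  filter_upwards [self_mem_nhdsWithin] with d hd
  obtain ⟨w, hw⟩ := dvd_cutoff (n := 0) hd
    (isSelfAdjoint_sum Finset.univ fun j _ => IsSelfAdjoint.star_mul_self (x j))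
  rw [hw]
  exact J.mul_mem_left _ _ (J.mul_mem_right _ _ hx)

lemma mem_of_star_mul_self_mem (hJ : IsClosed (J : Set A)) {x : A} (hx : star x * x ∈ J) :
    x ∈ J :=
  mem_of_sum_star_mul_self_mem hJ (x := fun _ : Unit => x) (by simpa using hx) ()

lemma star_mem_of_isClosed (hJ : IsClosed (J : Set A)) {x : A} (hx : x ∈ J) : star x ∈ J :=
  mem_of_star_mul_self_mem hJ (by simpa using J.mul_mem_right x (star x) hx)

lemma mem_of_mul_star_self_mem (hJ : IsClosed (J : Set A)) {x : A} (hx : x * star x ∈ J) :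
    x ∈ J := by
  have hstar : star x ∈ J := mem_of_star_mul_self_mem hJ (by rwa [star_star])
  simpa using star_mem_of_isClosed hJ hstar

end ClosedIdeal

section NormedRing

variable {R : Type*} [NormedRing R] [HasSummableGeomSeries R]

lemma eventually_isUnit_of_continuous {F : R → R} {w : R} (hF : Continuous F) (hFw : F w = 1) :
    ∀ᶠ v in 𝓝 w, IsUnit (F v) :=
  hF.continuousAt (Units.isOpen.mem_nhds (hFw ▸ isUnit_one))

lemma tendsto_ringInverse_one {F : R → R} {w : R} (hF : Continuous F) (hFw : F w = 1) :
    Tendsto (fun v => Ring.inverse (F v)) (𝓝 w) (𝓝 1) := by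
  have h1 : Tendsto Ring.inverse (𝓝 (1 : R)) (𝓝 1) := by
    simpa using (NormedRing.inverse_continuousAt (1 : Rˣ)).tendsto
  exact h1.comp (hF.tendsto' w 1 hFw)

variable (hR : Dense {a : R | IsUnit a})
include hR

lemma mem_closure_isUnit_and_mul_eq {s w e : R} (hswe : s * w * e = e) :
    w ∈ closure {v | IsUnit v ∧ v * e = w * e} := by
  let F : R → R := fun v => 1 + (v - w) * s
  have hF : Continuous F := by fun_prop
  have hFw : F w = 1 := by simp [F]
  have hlim : Tendsto (fun v => Ring.inverse (F v) * v) (𝓝 w) (𝓝 w) := by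
    simpa using (tendsto_ringInverse_one hF hFw).mul tendsto_id
  have hmem : ∀ᶠ v in 𝓝 w, IsUnit v →
      Ring.inverse (F v) * v ∈ {v | IsUnit v ∧ v * e = w * e} := by
    filter_upwards [eventually_isUnit_of_continuous hF hFw] with v hFv hv
    have hFwe : F v * (w * e) = v * e := by
      calc F v * (w * e) = w * e + (v - w) * (s * w * e) := by simp only [F]; noncomm_ring
        _ = v * e := by rw [hswe]; noncomm_ring
    refine ⟨hFv.ringInverse.mul hv, ?_⟩
    rw [mul_assoc, ← hFwe, ← mul_assoc, Ring.inverse_mul_cancel _ hFv, one_mul]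
  have hfreq : ∃ᶠ v in 𝓝 w, IsUnit v := mem_closure_iff_frequently.1 (hR w)
  exact mem_closure_of_frequently_of_tendsto
    ((hfreq.and_eventually hmem).mono fun v hv => hv.2 hv.1) hlim

lemma mem_closure_isUnit_and_dvd_sub {c x : R} (hcx : c ∣ x - 1) :
    x ∈ closure {w | IsUnit w ∧ c ∣ w - x} := by
  let F : R → R := fun w => 1 + (w - x)
  have hF : Continuous F := by fun_prop
  have hFx : F x = 1 := by simp [F]
  have hlim : Tendsto (fun w => w * Ring.inverse (F w)) (𝓝 x) (𝓝 x) := by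
    simpa using tendsto_id.mul (tendsto_ringInverse_one hF hFx)
  have hmem : ∀ᶠ w in 𝓝 x, IsUnit w →
      w * Ring.inverse (F w) ∈ {w | IsUnit w ∧ c ∣ w - x} := by
    filter_upwards [eventually_isUnit_of_continuous hF hFx] with w hFw hw
    refine ⟨hw.mul hFw.ringInverse, ?_⟩
    have heq : w * Ring.inverse (F w) - x = (x - 1) * ((1 - F w) * Ring.inverse (F w)) := by
      calc w * Ring.inverse (F w) - x
          = w * Ring.inverse (F w) - x * (F w * Ring.inverse (F w)) := by
            rw [Ring.mul_inverse_cancel _ hFw, mul_one]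
        _ = (x - 1) * ((1 - F w) * Ring.inverse (F w)) := by simp only [F]; noncomm_ring
    exact heq ▸ hcx.mul_right _
  have hfreq : ∃ᶠ w in 𝓝 x, IsUnit w := mem_closure_iff_frequently.1 (hR x)
  exact mem_closure_of_frequently_of_tendsto
    ((hfreq.and_eventually hmem).mono fun w hw => hw.2 hw.1) hlim

end NormedRing

section StableRankOne

variable {A : Type*} [CStarAlgebra A]

/- The unitary is the polar part of `v`; since `1 + |v|` is invertible, `|v|² f = f` forces
`|v| f = f`. -/
lemma exists_mem_unitary_mul_eq_of_isUnit {v f : A} (hv : IsUnit v) (hf : star v * v * f = f) :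
    ∃ u ∈ unitary A, u * f = v * f := by
  let _ := CStarAlgebra.spectralOrder A
  let _ := CStarAlgebra.spectralOrderedRing A
  set s := CFC.abs v
  have hss : s * s = star v * v := CFC.abs_mul_abs v
  have hs_unit : IsUnit s := by
    rw [← isUnit_mul_self_iff, hss]
    exact hv.star.mul hv
  have hs1_unit : IsUnit (1 + s) := by
    have hmem : (-1 : ℝ) ∉ spectrum ℝ s := fun h =>
      absurd (spectrum_nonneg_of_nonneg (CFC.abs_nonneg v) h) (by norm_num)
    have hunit : IsUnit (-1 - s) := by simpa [spectrum.mem_iff] using hmem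
    simpa [add_comm] using hunit.neg
  have hsf : s * f = f := by
    refine hs1_unit.mul_left_cancel ?_
    rw [add_mul, one_mul, ← mul_assoc, hss, hf, add_mul, one_mul, add_comm]
  set s' := Ring.inverse s
  have hs's : s' * s = 1 := Ring.inverse_mul_cancel s hs_unit
  have hss' : s * s' = 1 := Ring.mul_inverse_cancel s hs_unit
  have hs'_star : star s' = s' := by
    rw [← Ring.inverse_star, (CFC.abs_nonneg v).isSelfAdjoint.star_eq]
  refine ⟨v * s', (hv.mul hs_unit.ringInverse).mem_unitary_of_star_mul_self ?_, ?_⟩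
  · calc star (v * s') * (v * s') = s' * (star v * v) * s' := by
          rw [star_mul, hs'_star]; simp only [mul_assoc]
      _ = (s' * s) * (s * s') := by rw [← hss]; simp only [mul_assoc]
      _ = 1 := by rw [hs's, hss', one_mul]
  · nth_rewrite 1 [← hsf]
    rw [mul_assoc, ← mul_assoc s', hs's, one_mul]

lemma exists_norm_sub_mul_lt_and_mul_star_mul_eq (x : A) {ε : ℝ} (hε : 0 < ε) :
    ∃ E g, x ∣ E ∧ g * (x * star x) * E = E ∧ ‖x - E * x‖ < ε := by
  have hnear := (tendsto_cutoff_mul x 1).eventually (Metric.ball_mem_nhds x hε)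
  obtain ⟨d, hdx, hd⟩ := (hnear.and self_mem_nhdsWithin).exists
  have hh : IsSelfAdjoint (x * star x) := .mul_star_self x
  obtain ⟨g, hg⟩ : x * star x ∣ cutoff d 0 (x * star x) := dvd_cutoff hd hh
  refine ⟨cutoff d 1 (x * star x), star g, (dvd_mul_right _ _).trans (dvd_cutoff hd hh), ?_, ?_⟩
  · rw [← hh.star_eq, ← star_mul, ← hg, isSelfAdjoint_cutoff.star_eq,
      hh.star_eq, cutoff_mul_cutoff_of_lt hd one_pos]
  · rwa [← dist_eq_norm']

lemma span_setOf_dvd_star_and_exists_dvd_eq_top {c r : A} (hc : IsFull c) (hr : IsFull r) :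
    TwoSidedIdeal.span {x | r ∣ star x ∧ ∃ e, c ∣ e ∧ e * x = x} = ⊤ := by
  refine span_eq_top_iff.2 fun J hJ => ?_
  have hJc : IsClosed (J : Set A) := isClosed_of_isCoatom hJ
  have hr' : star r ∉ J := fun h => isFull_iff.1 hr J hJ (by simpa using star_mem_of_isClosed hJc h)
  obtain ⟨t, ht⟩ := exists_mul_mul_notMem hJ (isFull_iff.1 hc J hJ) hr'
  set x := c * t * star r
  obtain ⟨d, hdJ, hd⟩ : ∃ d : ℝ, cutoff d 1 (x * star x) * x ∉ J ∧ 0 < d :=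
    (((tendsto_cutoff_mul x 1).eventually (hJc.isOpen_compl.mem_nhds ht)).and
      self_mem_nhdsWithin).exists
  refine ⟨cutoff d 1 (x * star x) * x, ⟨?_, cutoff d 0 (x * star x), ?_, ?_⟩, hdJ⟩
  · simp only [x, star_mul, star_star, mul_assoc]
    exact dvd_mul_right _ _
  · have hcx : c ∣ x * star x := ⟨t * star r * star x, by simp only [x, mul_assoc]⟩
    exact hcx.trans (dvd_cutoff hd (.mul_star_self x))
  · rw [← mul_assoc, cutoff_mul_cutoff_of_lt hd one_pos]

variable (hA : Dense {a : A | IsUnit a})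
include hA

lemma exists_isUnit_mul_eq_and_star_mul_mul_eq {e w : A} (he : IsSelfAdjoint e)
    (hwe : star w * w * e = e) : ∃ v, IsUnit v ∧ v * e = w * e ∧ star v * v * e = e := by
  let G : A → A := fun v => 1 + star w * (v - w)
  obtain ⟨v, hG, hv, hve⟩ : ∃ v, IsUnit (G v) ∧ IsUnit v ∧ v * e = w * e :=
    ((mem_closure_iff_frequently.1 (mem_closure_isUnit_and_mul_eq hA hwe)).and_eventually
      (eventually_isUnit_of_continuous (F := G) (by fun_prop) (by simp [G]))).exists.imp
      fun v hv => ⟨hv.2, hv.1⟩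
  set H := Ring.inverse (G v)
  have hGe : G v * e = e := by
    calc G v * e = e + star w * (v * e - w * e) := by simp only [G]; noncomm_ring
      _ = e := by rw [hve, sub_self, mul_zero, add_zero]
  have hvHe : v * H * e = w * e := by
    nth_rewrite 1 [← hGe]
    rw [mul_assoc, ← mul_assoc H, Ring.inverse_mul_cancel _ hG, one_mul, hve]
  have hew : e * star w * w = e := by simpa [he.star_eq, mul_assoc] using congrArg star hwe
  set f := w * e * star w
  have hf : star f = f := by simp [f, he.star_eq, mul_assoc]
  have hfw : f * w = w * e := by simp only [f, mul_assoc] at hew ⊢; rw [hew]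
  have hfv : f * (v * H) = f * w := by
    have hfG : f * v = f * w * G v := by
      calc f * v = f * w + f * (v - w) := by noncomm_ring
        _ = f * w + w * e * star w * (v - w) := rfl
        _ = f * w * G v := by rw [hfw]; simp only [G]; noncomm_ring
    rw [← mul_assoc, hfG, mul_assoc, Ring.mul_inverse_cancel _ hG, mul_one]
  have hvf : star (v * H) * f = star w * f := by simpa [hf] using congrArg star hfv
  refine ⟨v * H, hv.mul hG.ringInverse, hvHe, ?_⟩
  rw [mul_assoc, hvHe, ← hfw, ← mul_assoc, hvf, mul_assoc, hfw, ← mul_assoc, hwe]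

lemma exists_mem_unitary_mul_eq {e w : A} (he : IsSelfAdjoint e) (hwe : star w * w * e = e) :
    ∃ u ∈ unitary A, u * e = w * e := by
  obtain ⟨v, hv, hve, hvve⟩ := exists_isUnit_mul_eq_and_star_mul_mul_eq hA he hwe
  simpa only [hve] using exists_mem_unitary_mul_eq_of_isUnit hv hvve

lemma mem_closure_dvd_and_norm_sub_lt {c e r x y : A} {ε : ℝ} (hε : 0 < ε) (hce : c ∣ e)
    (hcy : c ∣ y) (hrx : r ∣ star x) (hry : r ∣ star y) (hex : e * x = x) :
    y ∈ closure {z | (c ∣ z ∧ r ∣ star z) ∧ ∃ p q, ‖x - p * z * q‖ < ε} := by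
  obtain ⟨E, g, hxE, hgE, hE⟩ := exists_norm_sub_mul_lt_and_mul_star_mul_eq x hε
  have heE : e * E = E := by
    obtain ⟨E', rfl⟩ := hxE
    rw [← mul_assoc, hex]
  set X := y * star x + 1 - e with hX
  have hcX : c ∣ X - 1 := by
    rw [show X - 1 = y * star x - e by rw [hX]; abel]
    exact dvd_sub (hcy.mul_right _) hce
  have hcont : Continuous fun W => y + (W - X) * (g * x) := by fun_prop
  have hclosure := map_mem_closure (t := {z | (c ∣ z ∧ r ∣ star z) ∧ ∃ p q, ‖x - p * z * q‖ < ε})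
    hcont (mem_closure_isUnit_and_dvd_sub hA hcX)
  simp only [sub_self, zero_mul, add_zero] at hclosure
  refine hclosure ?_
  rintro W ⟨hW, hcW⟩
  refine ⟨⟨dvd_add hcy (hcW.mul_right _), ?_⟩, Ring.inverse W, star x * E * x, ?_⟩
  · rw [star_add, star_mul, star_mul]
    exact dvd_add hry ((hrx.mul_right _).mul_right _)
  · have hWE : (y + (W - X) * (g * x)) * (star x * E) = W * E := by
      calc (y + (W - X) * (g * x)) * (star x * E)
          = y * star x * E + (W - X) * (g * (x * star x) * E) := by noncomm_ring
        _ = W * E + (e * E - E) := by rw [hgE, hX]; noncomm_ring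
        _ = W * E := by rw [heE, sub_self, add_zero]
    have hpq : Ring.inverse W * (y + (W - X) * (g * x)) * (star x * E * x) = E * x := by
      rw [mul_assoc, ← mul_assoc _ (star x * E), hWE, mul_assoc, ← mul_assoc,
        Ring.inverse_mul_cancel _ hW, one_mul]
    rwa [hpq]

lemma exists_dvd_forall_norm_sub_lt {c r : A} {ε : ℝ} (hε : 0 < ε) (G : Finset A)
    (hG : ∀ x ∈ G, r ∣ star x ∧ ∃ e, c ∣ e ∧ e * x = x) :
    ∃ z, (c ∣ z ∧ r ∣ star z) ∧ ∀ x ∈ G, ∃ p q, ‖x - p * z * q‖ < ε := by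
  classical
  induction G using Finset.induction_on with
  | empty => exact ⟨0, by simp⟩
  | insert x G _ ih =>
    rw [Finset.forall_mem_insert] at hG
    obtain ⟨⟨hrx, e, hce, hex⟩, hG⟩ := hG
    obtain ⟨y, ⟨hcy, hry⟩, hyG⟩ := ih hG
    have hopen : ∀ᶠ z in 𝓝 y, ∀ x ∈ G, ∃ p q, ‖x - p * z * q‖ < ε := by
      refine (Filter.eventually_all_finset G).2 fun x hx => ?_
      obtain ⟨p, q, hpq⟩ := hyG x hx
      have hcont : Continuous fun z => ‖x - p * z * q‖ := by fun_prop
      exact (hcont.continuousAt.eventually_lt continuousAt_const hpq).mono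
        fun z hz => ⟨p, q, hz⟩
    obtain ⟨z, ⟨hz, hzx⟩, hzG⟩ := ((mem_closure_iff_frequently.1
      (mem_closure_dvd_and_norm_sub_lt hA hε hce hcy hrx hry hex)).and_eventually hopen).exists
    exact ⟨z, hz, (Finset.forall_mem_insert ..).2 ⟨hzx, hzG⟩⟩

lemma exists_isFull_dvd_and_dvd_star {c r : A} (hc : IsFull c) (hr : IsFull r) :
    ∃ z, IsFull z ∧ c ∣ z ∧ r ∣ star z := by
  classical
  set S := {x : A | r ∣ star x ∧ ∃ e, c ∣ e ∧ e * x = x}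
  obtain ⟨F, hF⟩ := exists_finset_span_range_eq_top (y := ((↑) : S → A))
    (by simpa using span_setOf_dvd_star_and_exists_dvd_eq_top hc hr)
  obtain ⟨ε, hε, hball⟩ := Metric.isOpen_iff.1 (isOpen_setOf_span_range_eq_top F)
    (fun i : F => (i : A)) hF
  obtain ⟨z, ⟨hcz, hrz⟩, hz⟩ := exists_dvd_forall_norm_sub_lt hA hε (F.image ((↑) : S → A))
    (Finset.forall_mem_image.2 fun x _ => x.2)
  choose p q hpq using fun i : F => hz i (Finset.mem_image_of_mem _ i.2)
  have hspan : TwoSidedIdeal.span (Set.range fun i : F => p i * z * q i) = ⊤ :=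
    hball <| (dist_pi_lt_iff hε).2 fun i => by rw [dist_eq_norm']; exact hpq i
  refine ⟨z, top_unique (hspan ▸ TwoSidedIdeal.span_le.2 ?_), hcz, hrz⟩
  rintro _ ⟨i, rfl⟩
  exact TwoSidedIdeal.mul_mem_right _ _ _
    (TwoSidedIdeal.mul_mem_left _ _ _ (TwoSidedIdeal.subset_span rfl))

lemma exists_mem_unitary_mul_eq_and_mul_eq_self {e₀ e w γ : A} (he₀ : IsSelfAdjoint e₀)
    (he : IsSelfAdjoint e) (hγ : IsSelfAdjoint γ) (hwe₀ : star w * w * e₀ = e₀)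
    (hγe : γ * e = e) (hγe₀ : γ * e₀ = 0) (hγw : γ * w = 0) (hwγ : w * γ = 0) :
    ∃ u ∈ unitary A, (∀ x, e₀ * x = x → u * x = w * x) ∧ ∀ x, e * x = x → u * x = x := by
  have heγ : e * γ = e := by simpa [hγ.star_eq, he.star_eq] using congrArg star hγe
  have he₀γ : e₀ * γ = 0 := by simpa [hγ.star_eq, he₀.star_eq] using congrArg star hγe₀
  have hwγ' : star w * γ = 0 := by simpa [hγ.star_eq] using congrArg star hγw
  have hwe : star (w + γ) * (w + γ) * (e₀ + e) = e₀ + e := by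
    calc star (w + γ) * (w + γ) * (e₀ + e) = star (w + γ) * (w + γ) * (e₀ + γ * e) := by rw [hγe]
      _ = star w * w * e₀ + star w * (γ * e₀) + star w * (w * γ) * e + star w * γ * (γ * e)
          + γ * w * (e₀ + γ * e) + γ * (γ * e₀) + γ * (γ * (γ * e)) := by
        rw [star_add, hγ.star_eq]; noncomm_ring
      _ = e₀ + e := by simp [hwe₀, hγe₀, hwγ, hwγ', hγw, hγe]
  obtain ⟨u, hu, hue⟩ := exists_mem_unitary_mul_eq hA (he₀.add he) hwe
  have hux {x : A} (hx : (e₀ + e) * x = x) : u * x = (w + γ) * x := by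
    rw [← hx, ← mul_assoc, hue, mul_assoc]
  refine ⟨u, hu, fun x hx => ?_, fun x hx => ?_⟩
  · have hγx : γ * x = 0 := by rw [← hx, ← mul_assoc, hγe₀, zero_mul]
    have hex : e * x = 0 := by rw [← heγ, mul_assoc, hγx, mul_zero]
    rw [hux (by rw [add_mul, hx, hex, add_zero]), add_mul, hγx, add_zero]
  · have hγx : γ * x = x := by rw [← hx, ← mul_assoc, hγe]
    have he₀x : e₀ * x = 0 := by rw [← hγx, ← mul_assoc, he₀γ, zero_mul]
    have hwx : w * x = 0 := by rw [← hγx, ← mul_assoc, hwγ, zero_mul]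
    rw [hux (by rw [add_mul, hx, he₀x, zero_add]), add_mul, hγx, hwx, zero_add]

lemma exists_mem_unitary_dvd_mul_cutoff {e z γ : A} {d : ℝ} (hd : 0 < d) (hγ : IsSelfAdjoint γ)
    (he : IsSelfAdjoint e) (hγe : γ * e = e) (hγz : γ * z = 0) (hzγ : z * γ = 0) :
    ∃ u ∈ unitary A, z ∣ u * cutoff d 1 (star z * z) ∧ ∀ x, e * x = x → u * x = x := by
  have hh : IsSelfAdjoint (star z * z) := .star_mul_self z
  have hγh : γ * (star z * z) = 0 := by
    rw [← mul_assoc, show γ * star z = 0 by simpa [hγ.star_eq] using congrArg star hzγ, zero_mul]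
  have hhγ : star z * z * γ = 0 := by rw [mul_assoc, hzγ, mul_zero]
  set m := truncInvSqrt d (star z * z) with hm
  have hmγ : m * γ = γ * m := commute_truncInvSqrt (hhγ.trans hγh.symm)
  have hwe₀ : star (z * m) * (z * m) * cutoff d 0 (star z * z) = cutoff d 0 (star z * z) := by
    rw [star_mul, hm, isSelfAdjoint_truncInvSqrt.star_eq, ← mul_assoc, mul_assoc _ (star z),
      truncInvSqrt_mul_mul_truncInvSqrt_mul_cutoff hd hh]
  obtain ⟨u, hu, hue₀, hue⟩ := exists_mem_unitary_mul_eq_and_mul_eq_self hA isSelfAdjoint_cutoff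
    he hγ hwe₀ hγe (mul_cutoff_eq_zero hd hh hγh) (by rw [← mul_assoc, hγz, zero_mul])
    (by rw [mul_assoc, hmγ, ← mul_assoc, hzγ, zero_mul])
  refine ⟨u, hu, ?_, hue⟩
  rw [hue₀ _ (cutoff_mul_cutoff_of_lt hd one_pos), mul_assoc]
  exact dvd_mul_right _ _

lemma exists_mem_unitary_isFull_dvd {c e γ r : A} (hγ : IsSelfAdjoint γ) (he : IsSelfAdjoint e)
    (hγe : γ * e = e) (hc : IsFull c) (hr : IsFull r) (hγc : γ * c = 0) (hγr : γ * r = 0) :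
    ∃ u ∈ unitary A, (∀ x, e * x = x → u * x = x) ∧
      ∃ c', IsSelfAdjoint c' ∧ IsFull c' ∧ c ∣ c' ∧ r ∣ star u * c' * u := by
  obtain ⟨z, hz, hcz, hrz⟩ := exists_isFull_dvd_and_dvd_star hA hc hr
  have hγz : γ * z = 0 := by
    obtain ⟨a, rfl⟩ := hcz
    rw [← mul_assoc, hγc, zero_mul]
  have hzγ : z * γ = 0 := by
    obtain ⟨b, hb⟩ := hrz
    have hγz' : γ * star z = 0 := by rw [hb, ← mul_assoc, hγr, zero_mul]
    simpa [hγ.star_eq] using congrArg star hγz'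
  obtain ⟨d, hzd, hd⟩ : ∃ d : ℝ, IsFull (z * cutoff d 1 (star z * z)) ∧ 0 < d :=
    (((tendsto_mul_cutoff z 1).eventually (isOpen_setOf_isFull.mem_nhds hz)).and
      self_mem_nhdsWithin).exists
  obtain ⟨u, hu, hzu, hue⟩ := exists_mem_unitary_dvd_mul_cutoff hA hd hγ he hγe hγz hzγ
  have huu : star u * u = 1 := Unitary.star_mul_self_of_mem hu
  set e₁ := cutoff d 1 (star z * z)
  have he₁ : star e₁ = e₁ := isSelfAdjoint_cutoff.star_eq
  refine ⟨u, hu, hue, u * e₁ * star (u * e₁), .mul_star_self _, ?_, ?_, ?_⟩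
  · refine isFull_iff.2 fun J hJ hmem => isFull_iff.1 hzd.of_mul_left J hJ ?_
    have hue₁ : star u * (u * e₁) ∈ J :=
      J.mul_mem_left _ _ (mem_of_mul_star_self_mem (isClosed_of_isCoatom hJ) hmem)
    rwa [← mul_assoc, huu, one_mul] at hue₁
  · exact (hcz.trans hzu).mul_right _
  · have hconj : star u * (u * e₁ * star (u * e₁)) * u = e₁ * e₁ := by
      calc star u * (u * e₁ * star (u * e₁)) * u = (star u * u) * e₁ * e₁ * (star u * u) := by
            rw [star_mul, he₁]; simp only [mul_assoc]
        _ = e₁ * e₁ := by rw [huu, one_mul, mul_one]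
    rw [hconj]
    exact ((hrz.mul_right z).trans (dvd_cutoff hd (.star_mul_self z))).mul_right _

lemma exists_isFull_forall_dvd_unitary_conj {ι : Type*} (F : Finset ι) {c e γ : A} {r : ι → A}
    (hγ : IsSelfAdjoint γ) (he : IsSelfAdjoint e) (hγe : γ * e = e) (hc_sa : IsSelfAdjoint c)
    (hc : IsFull c) (hr : ∀ i ∈ F, IsFull (r i)) (hγc : γ * c = 0)
    (hγr : ∀ i ∈ F, γ * r i = 0) :
    ∃ c', IsSelfAdjoint c' ∧ IsFull c' ∧ c ∣ c' ∧ ∀ i ∈ F, ∃ u ∈ unitary A,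
      (∀ x, e * x = x → u * x = x) ∧ r i ∣ star u * c' * u := by
  classical
  induction F using Finset.induction_on with
  | empty => exact ⟨c, hc_sa, hc, dvd_rfl, by simp⟩
  | insert i F _ ih =>
    rw [Finset.forall_mem_insert] at hr hγr
    obtain ⟨c₁, -, hc₁, ⟨a, rfl⟩, hu₁⟩ := ih hr.2 hγr.2
    obtain ⟨u, hu, hue, c₂, hc₂_sa, hc₂, ⟨b, rfl⟩, hru⟩ := exists_mem_unitary_isFull_dvd hA hγ he
      hγe hc₁ hr.1 (by rw [← mul_assoc, hγc, zero_mul]) hγr.1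
    refine ⟨c * a * b, hc₂_sa, hc₂, ⟨a * b, mul_assoc ..⟩,
      (Finset.forall_mem_insert ..).2 ⟨⟨u, hu, hue, hru⟩, fun j hj => ?_⟩⟩
    obtain ⟨v, hv, hve, hrv⟩ := hu₁ j hj
    refine ⟨v, hv, hve, ?_⟩
    have hconj : star v * (c * a * b) * v = star v * (c * a) * v * (star v * b * v) := by
      calc star v * (c * a * b) * v = star v * (c * a) * 1 * (b * v) := by noncomm_ring
        _ = star v * (c * a) * v * (star v * b * v) := by
          rw [← Unitary.mul_star_self_of_mem hv]; noncomm_ring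
    exact hconj ▸ hrv.mul_right _

end StableRankOne

section OrthogonalFamily

/-- A family of pairwise orthogonal self-adjoint elements. -/
structure IsOrthogonalFamily {A ι : Type*} [Mul A] [Zero A] [Star A] (a : ι → A) : Prop where
  isSelfAdjoint : ∀ i, IsSelfAdjoint (a i)
  pairwise_mul_eq_zero : Pairwise fun i j => a i * a j = 0

variable {A ι : Type*}

lemma mul_eq_zero_symm [NonUnitalSemiring A] [StarRing A] {x y : A} (hx : IsSelfAdjoint x)
    (hy : IsSelfAdjoint y) (hxy : x * y = 0) : y * x = 0 := by
  simpa [hx.star_eq, hy.star_eq] using congrArg star hxy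

namespace IsOrthogonalFamily

section Ring

variable [Ring A] [StarRing A] {a : ι → A} {x : A}

lemma cons {n : ℕ} {a : Fin n → A} (ha : IsOrthogonalFamily a) (hx : IsSelfAdjoint x)
    (hxa : ∀ i, x * a i = 0) : IsOrthogonalFamily (Fin.cons x a : Fin (n + 1) → A) where
  isSelfAdjoint := Fin.cases (by simpa) (by simpa using ha.isSelfAdjoint)
  pairwise_mul_eq_zero i j hij := by
    induction i using Fin.cases with
    | zero =>
      induction j using Fin.cases with
      | zero => exact absurd rfl hij
      | succ j => simpa using hxa j
    | succ i =>
      induction j using Fin.cases with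
      | zero => simpa using mul_eq_zero_symm hx (ha.isSelfAdjoint i) (hxa i)
      | succ j => simpa using ha.pairwise_mul_eq_zero (by simpa using hij)

lemma update [DecidableEq ι] (ha : IsOrthogonalFamily a) {i : ι} (hx : IsSelfAdjoint x)
    (hxa : ∀ j, j ≠ i → x * a j = 0) : IsOrthogonalFamily (Function.update a i x) where
  isSelfAdjoint j := by
    obtain rfl | hj := eq_or_ne j i
    · simpa using hx
    · simpa [hj] using ha.isSelfAdjoint j
  pairwise_mul_eq_zero j l hjl := by
    obtain rfl | hj := eq_or_ne j i
    · simpa [hjl.symm] using hxa l hjl.symm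
    · obtain rfl | hl := eq_or_ne l i
      · simpa [hj] using mul_eq_zero_symm hx (ha.isSelfAdjoint j) (hxa j hj)
      · simpa [hj, hl] using ha.pairwise_mul_eq_zero hjl

lemma mul_left (ha : IsOrthogonalFamily a) {e : A} (he : IsSelfAdjoint e)
    (hea : ∀ i, Commute e (a i)) : IsOrthogonalFamily fun i => e * a i where
  isSelfAdjoint i := (he.commute_iff (ha.isSelfAdjoint i)).1 (hea i)
  pairwise_mul_eq_zero i j hij := by
    dsimp only
    rw [(hea j).eq, mul_assoc, ← mul_assoc (a i), ha.pairwise_mul_eq_zero hij, zero_mul, mul_zero]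

variable [Fintype ι]

lemma mul_sum (ha : IsOrthogonalFamily a) (i : ι) : a i * ∑ j, a j = a i * a i := by
  rw [Finset.mul_sum]
  exact Finset.sum_eq_single i (fun j _ hj => ha.pairwise_mul_eq_zero hj.symm) (by simp)

lemma sum_star_mul_self (ha : IsOrthogonalFamily a) :
    ∑ i, star (a i) * a i = (∑ i, a i) * ∑ i, a i := by
  rw [Finset.sum_mul]
  exact Finset.sum_congr rfl fun i _ => by rw [ha.mul_sum, (ha.isSelfAdjoint i).star_eq]

lemma commute_sum (ha : IsOrthogonalFamily a) (i : ι) : Commute (∑ j, a j) (a i) := by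
  have hsum : IsSelfAdjoint (∑ j, a j) := isSelfAdjoint_sum _ fun j _ => ha.isSelfAdjoint j
  refine ((ha.isSelfAdjoint i).commute_iff hsum |>.2 ?_).symm
  rw [ha.mul_sum]
  exact (ha.isSelfAdjoint i).commute_iff (ha.isSelfAdjoint i) |>.1 (Commute.refl _)

lemma commute_sum_star_mul_self (ha : IsOrthogonalFamily a) (i : ι) :
    Commute (∑ j, star (a j) * a j) (a i) := by
  rw [ha.sum_star_mul_self]
  exact (ha.commute_sum i).mul_left (ha.commute_sum i)

end Ring

end IsOrthogonalFamily

end OrthogonalFamily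

section MinimalModulo

variable {A : Type*} [CStarAlgebra A] {J : TwoSidedIdeal A} {p q : A}

/-- `A / J` contains `m` nonzero pairwise orthogonal self-adjoint elements, witnessed by
orthogonal lifts. -/
def HasOrthogonalFamily (J : TwoSidedIdeal A) (m : ℕ) : Prop :=
  ∃ a : Fin m → A, IsOrthogonalFamily a ∧ ∀ i, a i ∉ J

/-- The hereditary subalgebra generated by `p` contains no two orthogonal self-adjoint elements
that are both nonzero modulo `J`. Divisibility stands in for membership in that subalgebra. -/
def IsMinimalModulo (J : TwoSidedIdeal A) (p : A) : Prop :=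
  ∀ ⦃x y : A⦄, IsSelfAdjoint x → IsSelfAdjoint y → p ∣ x → p ∣ y → x * y = 0 → x ∈ J ∨ y ∈ J

lemma IsMinimalModulo.of_dvd (hp : IsMinimalModulo J p) (hpq : p ∣ q) : IsMinimalModulo J q :=
  fun _ _ hx hy hqx hqy => hp hx hy (hpq.trans hqx) (hpq.trans hqy)

lemma isMinimalModulo_of_not_hasOrthogonalFamily {m : ℕ} {a : Fin m → A}
    (ha : IsOrthogonalFamily a) (haJ : ∀ i, a i ∉ J) (hJ : ¬ HasOrthogonalFamily J (m + 1))
    (i : Fin m) : IsMinimalModulo J (a i) := by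
  rintro _ _ hx hy ⟨x, rfl⟩ ⟨y, rfl⟩ hxy
  by_contra! hxyJ
  have mul_eq_zero {z : A} (hz : IsSelfAdjoint (a i * z)) {j : Fin m} (hj : j ≠ i) :
      a i * z * a j = 0 := by
    rw [← hz.star_eq, star_mul, (ha.isSelfAdjoint i).star_eq, mul_assoc,
      ha.pairwise_mul_eq_zero hj.symm, mul_zero]
  refine hJ ⟨Fin.cons (a i * y) (Function.update a i (a i * x)),
    (ha.update hx fun j hj => mul_eq_zero hx hj).cons hy fun j => ?_, Fin.cases hxyJ.2 fun j => ?_⟩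
  · obtain rfl | hj := eq_or_ne j i
    · simpa using mul_eq_zero_symm hx hy hxy
    · simpa [hj] using mul_eq_zero hy hj
  · obtain rfl | hj := eq_or_ne j i
    · simpa using hxyJ.1
    · simpa [hj] using haJ j

lemma continuous_posPart_sub_algebraMap {b : A} (hb : IsSelfAdjoint b) :
    Continuous fun t : ℝ => (b - algebraMap ℝ A t)⁺ := by
  have hcfc (t : ℝ) : (b - algebraMap ℝ A t)⁺ = cfc (·⁺ : ℝ → ℝ) (b - algebraMap ℝ A t) :=
    cfcₙ_eq_cfc (by fun_prop) (by simp)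
  simp only [hcfc]
  exact Continuous.cfc_of_mem_nhdsSet (·⁺ : ℝ → ℝ) univ_mem
    (continuous_const.sub (continuous_algebraMap ℝ A))
    (fun t => hb.sub (.algebraMap A (.all t))) (by fun_prop)

lemma IsMinimalModulo.mul_posPart_mem_or_mul_negPart_mem (hp : IsMinimalModulo J p)
    (hp_sa : IsSelfAdjoint p) {b : A} (hbp : Commute b p) : p * b⁺ ∈ J ∨ p * b⁻ ∈ J := by
  let _ := CStarAlgebra.spectralOrder A
  let _ := CStarAlgebra.spectralOrderedRing A
  have hpos : Commute p b⁺ := (hbp.cfcₙ_real _).symm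
  have hneg : Commute p b⁻ := (hbp.cfcₙ_real _).symm
  refine hp ((hp_sa.commute_iff (CFC.posPart_nonneg b).isSelfAdjoint).1 hpos)
    ((hp_sa.commute_iff (CFC.negPart_nonneg b).isSelfAdjoint).1 hneg)
    (dvd_mul_right _ _) (dvd_mul_right _ _) ?_
  rw [hneg.eq, mul_assoc, ← mul_assoc _⁺, CFC.posPart_mul_negPart, zero_mul, mul_zero]

/- The real line is connected and covered by the closed sets of those `t` for which `p (p - t)⁺`,
respectively `p (p - t)⁻`, lies in `J`. -/
lemma IsMinimalModulo.exists_mul_self_sub_smul_mem (hJ : IsClosed (J : Set A))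
    (hp : IsMinimalModulo J p) (hp_sa : IsSelfAdjoint p) : ∃ t : ℝ, p * p - t • p ∈ J := by
  let _ := CStarAlgebra.spectralOrder A
  let _ := CStarAlgebra.spectralOrderedRing A
  have hsub (t : ℝ) : IsSelfAdjoint (p - algebraMap ℝ A t) := hp_sa.sub (.algebraMap A (.all t))
  set P : ℝ → A := fun t => p * (p - algebraMap ℝ A t)⁺
  set N : ℝ → A := fun t => p * (p - algebraMap ℝ A t)⁻
  have hPN (t : ℝ) : P t - N t = p * p - t • p := by
    rw [← mul_sub, CFC.posPart_sub_negPart _ (hsub t), mul_sub, Algebra.algebraMap_eq_smul_one,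
      mul_smul_comm, mul_one]
  have hP : Continuous P := continuous_const.mul (continuous_posPart_sub_algebraMap hp_sa)
  have hN : Continuous N := by
    have hN_eq : N = fun t => P t - (p * p - t • p) := funext fun t => by simp [← hPN]
    rw [hN_eq]
    fun_prop
  have hcover (t : ℝ) : P t ∈ J ∨ N t ∈ J :=
    hp.mul_posPart_mem_or_mul_negPart_mem hp_sa
      ((Commute.refl p).sub_left (Algebra.commutes t p))
  have hPJ : P ‖p‖ = 0 := by
    simp only [P, (CFC.posPart_eq_zero_iff _ (hsub _)).2
      (sub_nonpos.2 hp_sa.le_algebraMap_norm_self), mul_zero]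
  have hNJ : N (-‖p‖) = 0 := by
    have hle : 0 ≤ p - algebraMap ℝ A (-‖p‖) := by
      simpa [neg_le_iff_add_nonneg] using hp_sa.neg_algebraMap_norm_le_self
    simp only [N, (CFC.negPart_eq_zero_iff _ (hsub _)).2 hle, mul_zero]
  obtain ⟨t, -, htP, htN⟩ := isPreconnected_closed_iff.1 isPreconnected_univ (P ⁻¹' J) (N ⁻¹' J)
    (hJ.preimage hP) (hJ.preimage hN) (fun t _ => hcover t) ⟨‖p‖, trivial, by simp [hPJ]⟩
    ⟨-‖p‖, trivial, by simp [hNJ]⟩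
  exact ⟨t, hPN t ▸ J.sub_mem htP htN⟩

end MinimalModulo

section MinimalProjection

variable {A : Type*} [CStarAlgebra A] {J : TwoSidedIdeal A} {p q : A}

/-- `p` is self-adjoint and its image in `A / J` is a nonzero projection whose corner consists of
scalars. The last condition is imposed on self-adjoint elements, where the scalar is real. -/
structure IsMinimalProjectionModulo (J : TwoSidedIdeal A) (p : A) : Prop where
  isSelfAdjoint : IsSelfAdjoint p
  notMem : p ∉ J
  mul_self_sub_mem : p * p - p ∈ J
  exists_real_smul : ∀ b : A, IsSelfAdjoint b → ∃ t : ℝ, p * b * p - t • p ∈ J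

/- Besides `x = p b p`, apply minimality to `x + s p`: both satisfy a quadratic equation modulo `J`,
and the difference of the two equations is linear in `x` and `p`. -/
lemma IsMinimalModulo.exists_mul_mul_sub_smul_mem (hJ : IsClosed (J : Set A))
    (hp : IsMinimalModulo J p) (hp_sa : IsSelfAdjoint p) (hpJ : p ∉ J) (hpp : p * p - p ∈ J)
    {b : A} (hb : IsSelfAdjoint b) : ∃ t : ℝ, p * b * p - t • p ∈ J := by
  set x := p * b * p with hx
  have hx_sa : IsSelfAdjoint x := by simpa [hp_sa.star_eq] using hb.conjugate_self hp_sa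
  have hpx : p ∣ x := (dvd_mul_right p b).mul_right p
  have hpx_sub : p * x - x ∈ J := by
    convert J.mul_mem_right _ (b * p) hpp using 1
    rw [hx]; noncomm_ring
  have hxp_sub : x * p - x ∈ J := by
    convert J.mul_mem_left (p * b) _ hpp using 1
    rw [hx]; noncomm_ring
  obtain ⟨μ, hμ⟩ := (hp.of_dvd hpx).exists_mul_self_sub_smul_mem hJ hx_sa
  set s := |μ| + 1
  have hs : 0 < s := by positivity
  obtain ⟨l, hl⟩ := (hp.of_dvd (hpx.add (Dvd.intro _ (mul_smul_one s p))))
    |>.exists_mul_self_sub_smul_mem hJ (hx_sa.add ((IsSelfAdjoint.all s).smul hp_sa))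
  have hlinear : (μ + 2 * s - l) • x + (s * s - l * s) • p ∈ J := by
    convert J.sub_mem (J.sub_mem (J.sub_mem (J.sub_mem hl hμ) (smul_mem_of_mem s hpx_sub))
      (smul_mem_of_mem s hxp_sub)) (smul_mem_of_mem (s * s) hpp) using 1
    simp only [mul_add, add_mul, mul_smul_comm, smul_mul_assoc]
    module
  have hne : μ + 2 * s - l ≠ 0 := fun h => by
    rw [h, zero_smul, zero_add] at hlinear
    have hcoeff : s * s - l * s ≠ 0 := by
      rw [← sub_mul]
      exact mul_ne_zero (by linarith [neg_abs_le μ]) hs.ne'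
    exact hpJ (by simpa [hcoeff] using smul_mem_of_mem (s * s - l * s)⁻¹ hlinear)
  refine ⟨-((μ + 2 * s - l)⁻¹ * (s * s - l * s)), ?_⟩
  simpa [smul_smul, hne, neg_smul] using smul_mem_of_mem (μ + 2 * s - l)⁻¹ hlinear

lemma exists_isOrthogonalFamily_isMinimalProjectionModulo (hJ : IsClosed (J : Set A)) {m : ℕ}
    (hm : HasOrthogonalFamily J m) (hm' : ¬ HasOrthogonalFamily J (m + 1)) :
    ∃ p : Fin m → A, IsOrthogonalFamily p ∧ ∀ i, IsMinimalProjectionModulo J (p i) := by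
  obtain ⟨a, ha, haJ⟩ := hm
  choose t ht using fun i => (isMinimalModulo_of_not_hasOrthogonalFamily ha haJ hm' i)
    |>.exists_mul_self_sub_smul_mem hJ (ha.isSelfAdjoint i)
  have ht0 (i) : t i ≠ 0 := fun h0 => haJ i <| mem_of_star_mul_self_mem hJ <| by
    simpa [h0, (ha.isSelfAdjoint i).star_eq] using ht i
  set p : Fin m → A := fun i => (t i)⁻¹ • a i
  have hp : IsOrthogonalFamily p := {
    isSelfAdjoint i := (IsSelfAdjoint.all _).smul (ha.isSelfAdjoint i)
    pairwise_mul_eq_zero i j hij := by simp [p, ha.pairwise_mul_eq_zero hij] }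
  have hpJ (i) : p i ∉ J := fun hi => haJ i <| by
    simpa [p, smul_smul, ht0 i] using smul_mem_of_mem (t i) hi
  have hpp (i) : p i * p i - p i ∈ J := by
    convert smul_mem_of_mem ((t i)⁻¹ * (t i)⁻¹) (ht i) using 1
    simp [p, smul_sub, smul_smul, ht0 i]
  exact ⟨p, hp, fun i => ⟨hp.isSelfAdjoint i, hpJ i, hpp i, fun b hb =>
    (isMinimalModulo_of_not_hasOrthogonalFamily hp hpJ hm' i).exists_mul_mul_sub_smul_mem hJ
      (hp.isSelfAdjoint i) (hpJ i) (hpp i) hb⟩⟩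

/- If `e₁ ≤ e₀` are successive cutoffs of `∑ pᵢ²`, then `e₀ e₁ = e₁`, so `1 - e₀` is orthogonal to
all `e₁ pᵢ`. -/
lemma one_sub_sum_mem_of_not_hasOrthogonalFamily (hJ : IsClosed (J : Set A)) {m : ℕ}
    (hm : ¬ HasOrthogonalFamily J (m + 1)) {p : Fin m → A} (hp : IsOrthogonalFamily p)
    (hpJ : ∀ i, p i ∉ J) (hpp : ∀ i, p i * p i - p i ∈ J) : 1 - ∑ i, p i ∈ J := by
  set s := ∑ i, p i with hs
  have hss : ∑ i, star (p i) * p i = s * s := hp.sum_star_mul_self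
  have hcomm (i) : Commute (s * s) (p i) := hss ▸ hp.commute_sum_star_mul_self i
  obtain ⟨d, hd, hdJ⟩ : ∃ d > 0, ∀ i, cutoff d 1 (s * s) * p i ∉ J := by
    have hev (i) : ∀ᶠ d in 𝓝[>] (0 : ℝ), cutoff d 1 (s * s) * p i ∉ J := by
      simpa only [hss, ← (commute_cutoff (hcomm i)).eq, SetLike.mem_coe] using
        (tendsto_mul_cutoff_sum p i 1).eventually (hJ.isOpen_compl.mem_nhds (hpJ i))
    exact ((eventually_mem_nhdsWithin (s := Set.Ioi 0)).and (eventually_all.2 hev)).exists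
  set e := cutoff d 0 (s * s)
  have he : star e = e := isSelfAdjoint_cutoff.star_eq
  have heJ : 1 - e ∈ J := by
    by_contra heJ
    refine hm ⟨Fin.cons (1 - e) fun i => cutoff d 1 (s * s) * p i,
      (hp.mul_left isSelfAdjoint_cutoff fun i => commute_cutoff (hcomm i)).cons
        ((IsSelfAdjoint.one A).sub he) fun i => ?_, Fin.cases heJ hdJ⟩
    rw [← mul_assoc, sub_mul, one_mul, cutoff_mul_cutoff_of_lt hd one_pos, sub_self, zero_mul]
  have hs_sa : IsSelfAdjoint s := isSelfAdjoint_sum _ fun i _ => hp.isSelfAdjoint i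
  obtain ⟨w, hw⟩ : s * s ∣ e :=
    dvd_cutoff hd ((hs_sa.commute_iff hs_sa).1 (Commute.refl s))
  have hsJ : s - s * s ∈ J := by
    rw [← hss, hs, ← Finset.sum_sub_distrib]
    refine sum_mem fun i _ => ?_
    simpa [(hp.isSelfAdjoint i).star_eq] using J.neg_mem (hpp i)
  have hdecomp : 1 - s = (1 - e) * (1 - s) + star w * s * (s - s * s) := by
    nth_rewrite 1 [← he, hw]
    simp only [star_mul, hs_sa.star_eq]
    noncomm_ring
  rw [hdecomp]
  exact J.add_mem (J.mul_mem_right _ _ heJ) (J.mul_mem_left _ _ hsJ)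

namespace IsMinimalProjectionModulo

lemma exists_smul (hp : IsMinimalProjectionModulo J p) (b : A) :
    ∃ c : ℂ, p * b * p - c • p ∈ J := by
  obtain ⟨t, ht⟩ := hp.exists_real_smul _ (realPart b).2
  obtain ⟨s, hs⟩ := hp.exists_real_smul _ (imaginaryPart b).2
  refine ⟨t + s * Complex.I, ?_⟩
  convert J.add_mem ht (smul_mem_of_mem Complex.I hs) using 1
  nth_rewrite 1 [← realPart_add_I_smul_imaginaryPart b]
  simp only [mul_add, add_mul, mul_smul_comm, smul_mul_assoc, smul_sub, ← Complex.coe_smul]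
  module

lemma eq_zero_of_smul_mem (hp : IsMinimalProjectionModulo J p) {c : ℂ} (hc : c • p ∈ J) :
    c = 0 := by
  by_contra hc0
  exact hp.notMem (by simpa [hc0] using smul_mem_of_mem c⁻¹ hc)

end IsMinimalProjectionModulo

end MinimalProjection

section Representation

variable {A : Type*} [CStarAlgebra A] {J : TwoSidedIdeal A} {p q : A}

lemma eq_of_star_mul_self_sub_smul_mem {v : A} (hv : v ∉ J) (hvp : v * p - v ∈ J)
    (hqv : q * v - v ∈ J) {μ ν : ℝ} (hμ : star v * v - μ • p ∈ J)
    (hν : v * star v - ν • q ∈ J) : ν = μ := by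
  have hmem : (ν - μ) • v ∈ J := by
    convert J.sub_mem (J.add_mem (J.mul_mem_left v _ hμ) (smul_mem_of_mem μ hvp))
      (J.add_mem (J.mul_mem_right _ v hν) (smul_mem_of_mem ν hqv)) using 1
    simp only [mul_sub, sub_mul, mul_smul_comm, smul_mul_assoc, mul_assoc]
    module
  by_contra hne
  exact hv (by simpa [smul_smul, sub_ne_zero.2 hne] using smul_mem_of_mem (ν - μ)⁻¹ hmem)

namespace IsMinimalProjectionModulo

lemma pos_of_star_mul_self_sub_smul_mem (hJ : IsClosed (J : Set A))
    (hp : IsMinimalProjectionModulo J p) {v : A} (hv : v ∉ J) {μ : ℝ}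
    (hμ : star v * v - μ • p ∈ J) : 0 < μ := by
  by_contra! hμ0
  refine hv (mem_of_sum_star_mul_self_mem hJ (x := ![v, √(-μ) • p]) ?_ 0)
  convert J.sub_mem hμ (smul_mem_of_mem μ hp.mul_self_sub_mem) using 1
  simp [Fin.sum_univ_two, hp.isSelfAdjoint.star_eq, smul_smul, Real.mul_self_sqrt, hμ0,
    sub_eq_add_neg]

lemma exists_star_mul_self_sub_smul_mem (hp : IsMinimalProjectionModulo J p) (x : A) :
    ∃ μ : ℝ, star (x * p) * (x * p) - μ • p ∈ J := by
  obtain ⟨μ, hμ⟩ := hp.exists_real_smul _ (IsSelfAdjoint.star_mul_self x)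
  exact ⟨μ, by simpa [hp.isSelfAdjoint.star_eq, mul_assoc] using hμ⟩

/- The partial isometry is a multiple of any `v = q s p ∉ J`: both `v⋆ v` and `v v⋆` are scalars
modulo `J`, and `v (v⋆ v) = (v v⋆) v` shows that the scalars agree. -/
lemma exists_partialIsometry (hJ : IsCoatom J) (hp : IsMinimalProjectionModulo J p)
    (hq : IsMinimalProjectionModulo J q) :
    ∃ t : A, star (t * p) * (t * p) - p ∈ J ∧ t * p * star (t * p) - q ∈ J := by
  obtain ⟨s, hs⟩ := exists_mul_mul_notMem hJ hq.notMem hp.notMem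
  set v := q * s * p with hv
  have hv_star : star v = p * star s * q := by
    simp [hv, hp.isSelfAdjoint.star_eq, hq.isSelfAdjoint.star_eq, mul_assoc]
  obtain ⟨μ, hμ⟩ : ∃ μ : ℝ, star v * v - μ • p ∈ J :=
    hp.exists_star_mul_self_sub_smul_mem (q * s)
  obtain ⟨ν, hν⟩ : ∃ ν : ℝ, v * star v - ν • q ∈ J := by
    simpa [← hv_star] using hq.exists_star_mul_self_sub_smul_mem (p * star s)
  have hvp : v * p - v ∈ J := by
    rw [hv]
    convert J.mul_mem_left (q * s) _ hp.mul_self_sub_mem using 1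
    noncomm_ring
  have hqv : q * v - v ∈ J := by
    rw [hv]
    convert J.mul_mem_right _ (s * p) hq.mul_self_sub_mem using 1
    noncomm_ring
  have hμν : ν = μ := eq_of_star_mul_self_sub_smul_mem hs hvp hqv hμ hν
  have hμ0 : 0 < μ := hp.pos_of_star_mul_self_sub_smul_mem (isClosed_of_isCoatom hJ) hs hμ
  have hsqrt : (√μ)⁻¹ * (√μ)⁻¹ = μ⁻¹ := by rw [← mul_inv, Real.mul_self_sqrt hμ0.le]
  refine ⟨(√μ)⁻¹ • (q * s), ?_, ?_⟩
  · simpa [hv, smul_smul, hsqrt, smul_sub, hμ0.ne'] using smul_mem_of_mem μ⁻¹ hμ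
  · simpa [hv, smul_smul, hsqrt, smul_sub, hμν, hμ0.ne'] using smul_mem_of_mem μ⁻¹ hν

lemma exists_linearMap (hJ : IsClosed (J : Set A)) (hp : IsMinimalProjectionModulo J p) :
    ∃ ω : A →ₗ[ℂ] ℂ, (∀ a, p * a * p - ω a • p ∈ J) ∧ ∀ a, ω (star a) = star (ω a) := by
  choose ω hω using hp.exists_smul
  have hunique {a : A} {c : ℂ} (hc : p * a * p - c • p ∈ J) : ω a = c := by
    refine sub_eq_zero.1 (hp.eq_zero_of_smul_mem ?_)
    convert J.sub_mem hc (hω a) using 1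
    module
  refine ⟨{ toFun := ω, map_add' := fun a b => hunique ?_, map_smul' := fun c a => hunique ?_ },
    hω, fun a => hunique ?_⟩
  · convert J.add_mem (hω a) (hω b) using 1
    simp only [mul_add, add_mul]
    module
  · convert smul_mem_of_mem c (hω a) using 1
    simp [smul_sub, smul_smul]
  · simpa [hp.isSelfAdjoint.star_eq, mul_assoc] using star_mem_of_isClosed hJ (hω a)

lemma sum_mul_eq_of_sum_mul_star_sub_one_mem {ι : Type*} [Fintype ι]
    (hp : IsMinimalProjectionModulo J p) {t : ι → A}
    (ht : ∑ i, t i * p * star (t i * p) - 1 ∈ J) {ω : A → ℂ}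
    (hω : ∀ a, p * a * p - ω a • p ∈ J) (x y : A) :
    ∑ i, ω (x * t i) * ω (star (t i) * y) = ω (x * y) := by
  refine sub_eq_zero.1 (hp.eq_zero_of_smul_mem ?_)
  have hterm (i : ι) : p * x * (t i * p * star (t i * p)) * (y * p)
      - (ω (x * t i) * ω (star (t i) * y)) • p ∈ J := by
    convert J.add_mem (J.add_mem
      (J.mul_mem_right _ (p * (star (t i) * y) * p) (hω (x * t i)))
      (J.mul_mem_left (ω (x * t i) • p) _ (hω (star (t i) * y))))
      (smul_mem_of_mem (ω (x * t i) * ω (star (t i) * y)) hp.mul_self_sub_mem) using 1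
    simp only [star_mul, hp.isSelfAdjoint.star_eq, mul_sub, sub_mul, mul_smul_comm,
      smul_mul_assoc, mul_assoc]
    module
  convert J.sub_mem (J.add_mem (J.mul_mem_right _ (y * p) (J.mul_mem_left (p * x) _ ht))
    (hω (x * y))) (sum_mem fun i (_ : i ∈ Finset.univ) => hterm i) using 1
  rw [Finset.sum_sub_distrib, ← Finset.sum_mul, ← Finset.mul_sum, ← Finset.sum_smul]
  simp only [mul_sub, sub_mul, mul_one, sub_smul, mul_assoc]
  abel

lemma exists_map_one_ne_zero {ι : Type*} [Fintype ι] [Nonempty ι] (hJ : IsClosed (J : Set A))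
    (hp : IsMinimalProjectionModulo J p) {t : ι → A}
    (ht : ∀ i, star (t i * p) * (t i * p) - p ∈ J)
    (ht_sum : ∑ i, t i * p * star (t i * p) - 1 ∈ J) :
    ∃ φ : A →⋆ₙₐ[ℂ] Matrix ι ι ℂ, φ 1 ≠ 0 := by
  obtain ⟨ω, hω, hω_star⟩ := hp.exists_linearMap hJ
  have hmul := hp.sum_mul_eq_of_sum_mul_star_sub_one_mem ht_sum hω
  let φ : A →⋆ₙₐ[ℂ] Matrix ι ι ℂ := {
    toFun a := .of fun i j => ω (star (t i) * a * t j)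
    map_smul' c a := by ext; simp
    map_zero' := by ext; simp
    map_add' a b := by ext; simp [mul_add, add_mul]
    map_mul' a b := by
      ext i j
      simpa [Matrix.mul_apply, mul_assoc] using (hmul (star (t i) * a) (b * t j)).symm
    map_star' a := by ext; simp [← hω_star, mul_assoc] }
  refine ⟨φ, fun h => hp.notMem ?_⟩
  obtain ⟨i⟩ := ‹Nonempty ι›
  have hωi : ω (star (t i) * t i) = 0 := by simpa [φ] using congrFun₂ h i i
  convert J.sub_mem (hω (star (t i) * t i)) (ht i) using 1
  simp [hωi, hp.isSelfAdjoint.star_eq, mul_assoc]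

end IsMinimalProjectionModulo

lemma exists_map_one_ne_zero_of_hasOrthogonalFamily (hJ : IsCoatom J) {m : ℕ} [NeZero m]
    (hm : HasOrthogonalFamily J m) (hm' : ¬ HasOrthogonalFamily J (m + 1)) :
    ∃ φ : A →⋆ₙₐ[ℂ] Matrix (Fin m) (Fin m) ℂ, φ 1 ≠ 0 := by
  have hJ_closed := isClosed_of_isCoatom hJ
  obtain ⟨p, hp, hp_min⟩ := exists_isOrthogonalFamily_isMinimalProjectionModulo hJ_closed hm hm'
  choose t ht ht' using fun i => (hp_min 0).exists_partialIsometry hJ (hp_min i)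
  refine (hp_min 0).exists_map_one_ne_zero hJ_closed ht ?_
  have hone := one_sub_sum_mem_of_not_hasOrthogonalFamily hJ_closed hm' hp
    (fun i => (hp_min i).notMem) fun i => (hp_min i).mul_self_sub_mem
  convert J.sub_mem (sum_mem fun i (_ : i ∈ Finset.univ) => ht' i) hone using 1
  rw [Finset.sum_sub_distrib]
  abel

lemma hasOrthogonalFamily_of_forall_map_one_eq_zero (hJ : IsCoatom J) {k : ℕ}
    (hk : ∀ m, 1 ≤ m → m < k → ∀ φ : A →⋆ₙₐ[ℂ] Matrix (Fin m) (Fin m) ℂ, φ 1 = 0) :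
    HasOrthogonalFamily J k := by
  suffices ∀ m ≤ k, HasOrthogonalFamily J m from this k le_rfl
  intro m
  induction m with
  | zero => exact fun _ => ⟨Fin.elim0, ⟨Fin.rec0, Fin.rec0⟩, Fin.rec0⟩
  | succ m ih =>
    intro hmk
    by_contra hm'
    obtain rfl | hm := m.eq_zero_or_pos
    · refine hm' ⟨fun _ => 1, ⟨fun _ => .one A, fun i j hij => ?_⟩, fun _ =>
        one_notMem_of_isCoatom hJ⟩
      exact absurd (Fin.subsingleton_one.elim i j) hij
    · have : NeZero m := ⟨hm.ne'⟩
      obtain ⟨φ, hφ⟩ := exists_map_one_ne_zero_of_hasOrthogonalFamily hJ (ih (by lia)) hm'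
      exact hφ (hk m hm (by lia) φ)

end Representation

section FullOrthogonalFamily

variable {A : Type*} [CStarAlgebra A]

/-- Modulo every maximal ideal, `S` contains `n` nonzero pairwise orthogonal self-adjoint elements
(orthogonal already in `A`). -/
def HasOrthogonalFamiliesIn (S : Set A) (n : ℕ) : Prop :=
  ∀ J : TwoSidedIdeal A, IsCoatom J →
    ∃ a : Fin n → A, IsOrthogonalFamily a ∧ (∀ i, a i ∈ S) ∧ ∀ i, a i ∉ J

lemma HasOrthogonalFamiliesIn.mono {S T : Set A} {n : ℕ} (hS : HasOrthogonalFamiliesIn S n)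
    (hST : S ⊆ T) : HasOrthogonalFamiliesIn T n := fun J hJ =>
  let ⟨a, ha, haS, haJ⟩ := hS J hJ
  ⟨a, ha, fun i => hST (haS i), haJ⟩

lemma HasOrthogonalFamiliesIn.isFull {g : A} {n : ℕ}
    (hg : HasOrthogonalFamiliesIn {x | x * g = x} (n + 1)) : IsFull g := by
  refine isFull_iff.2 fun J hJ hgJ => ?_
  obtain ⟨a, -, hag, haJ⟩ := hg J hJ
  exact haJ 0 (hag 0 ▸ J.mul_mem_left _ _ hgJ)

lemma IsOrthogonalFamily.exists_tail_mem_span_head {J : TwoSidedIdeal A} (hJ : IsCoatom J) {n : ℕ}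
    {a : Fin (n + 1) → A} (ha : IsOrthogonalFamily a) (haJ : ∀ i, a i ∉ J) :
    ∃ b : Fin n → A, IsOrthogonalFamily b ∧ (∀ i, b i ∉ J) ∧ (∀ i, b i * a 0 = 0) ∧
      (∀ i, a i.succ ∣ b i) ∧ ∀ i, b i ∈ TwoSidedIdeal.span {a 0} := by
  have hmul (i : Fin n) := exists_mul_mul_notMem hJ (haJ i.succ) (haJ 0)
  choose t ht using hmul
  let x (i : Fin n) : A := a i.succ * t i * a 0
  have hx_star (i : Fin n) : star (x i) = a 0 * star (t i) * a i.succ := by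
    simp [x, (ha.isSelfAdjoint _).star_eq, mul_assoc]
  refine ⟨fun i => x i * star (x i), ⟨fun i => .mul_star_self _, fun i j hij => ?_⟩,
    fun i hi => ht i (mem_of_mul_star_self_mem (isClosed_of_isCoatom hJ) hi), fun i => ?_,
    fun i => ?_, fun i => ?_⟩
  · calc x i * star (x i) * (x j * star (x j))
        = x i * (a 0 * star (t i)) * (a i.succ * a j.succ) * (t j * a 0 * star (x j)) := by
          rw [hx_star i]; simp only [x, mul_assoc]
      _ = 0 := by
          rw [ha.pairwise_mul_eq_zero ((Fin.succ_injective n).ne hij), mul_zero, zero_mul]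
  · dsimp only
    rw [hx_star, mul_assoc, mul_assoc (a 0 * star (t i)),
      ha.pairwise_mul_eq_zero (Fin.succ_ne_zero i), mul_zero, mul_zero]
  · simp only [x, mul_assoc]
    exact dvd_mul_right _ _
  · exact TwoSidedIdeal.mul_mem_right _ _ _
      (TwoSidedIdeal.mul_mem_left _ _ _ (TwoSidedIdeal.subset_span rfl))

/- An ideal containing `g (1 - e₀)` contains `g (1 - e₀) a = a`, then `h`, `e₀` and finally `g`. -/
lemma IsFull.mul_one_sub_cutoff {a g h : A} {d : ℝ} (hg : IsFull g) (hga : g * a = a) (hd : 0 < d)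
    (hh : IsSelfAdjoint h) (hha : h * a = 0) (h_mem : h ∈ TwoSidedIdeal.span {a}) :
    IsFull (g * (1 - cutoff d 0 h)) := by
  refine isFull_iff.2 fun J hJ hgJ => isFull_iff.1 hg J hJ ?_
  have haJ : a ∈ J := by
    have hra : g * (1 - cutoff d 0 h) * a ∈ J := J.mul_mem_right _ _ hgJ
    rwa [mul_assoc, sub_mul, one_mul, cutoff_mul_eq_zero hd hh hha, sub_zero, hga] at hra
  have hhJ : h ∈ J := TwoSidedIdeal.span_le.2 (Set.singleton_subset_iff.2 haJ) h_mem
  obtain ⟨w, hw⟩ := dvd_cutoff (n := 0) hd hh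
  have hsum := J.add_mem hgJ (J.mul_mem_left g _ (hw ▸ J.mul_mem_right _ w hhJ))
  rwa [← mul_add, sub_add_cancel, mul_one] at hsum

lemma exists_isFull_and_isOrthogonalFamily {g : A} {n : ℕ} (hg : IsSelfAdjoint g)
    (hfam : HasOrthogonalFamiliesIn {x | x * g = x} (n + 1)) {J : TwoSidedIdeal A}
    (hJ : IsCoatom J) :
    ∃ r, IsFull r ∧ g ∣ r ∧ ∃ b : Fin n → A,
      IsOrthogonalFamily b ∧ (∀ i, b i ∉ J) ∧ (∀ i, b i * g = b i) ∧ ∀ i, b i * r = 0 := by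
  obtain ⟨a, ha, hag, haJ⟩ := hfam J hJ
  have hga (i) : g * a i = a i := by
    simpa [hg.star_eq, (ha.isSelfAdjoint i).star_eq] using congrArg star (hag i)
  obtain ⟨b, hb, hbJ, hba, hab, hb_span⟩ := ha.exists_tail_mem_span_head hJ haJ
  have hgb (i) : g * b i = b i := by
    obtain ⟨w, hw⟩ := hab i
    rw [hw, ← mul_assoc, hga]
  have hbg (i) : b i * g = b i := by
    simpa [hg.star_eq, (hb.isSelfAdjoint i).star_eq] using congrArg star (hgb i)
  set h := ∑ i, star (b i) * b i
  have hh : IsSelfAdjoint h := isSelfAdjoint_sum _ fun i _ => .star_mul_self _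
  have hev (i) : ∀ᶠ d in 𝓝[>] 0, b i * cutoff d 1 h ∉ J :=
    (tendsto_mul_cutoff_sum b i 1).eventually
      ((isClosed_of_isCoatom hJ).isOpen_compl.mem_nhds (hbJ i))
  obtain ⟨d, hd, hdJ⟩ := ((eventually_mem_nhdsWithin (s := Set.Ioi 0)).and
    (eventually_all.2 hev)).exists
  have hcomm (i) : Commute (cutoff d 1 h) (b i) := commute_cutoff (hb.commute_sum_star_mul_self i)
  have hha : h * a 0 = 0 := by
    rw [Finset.sum_mul]
    exact Finset.sum_eq_zero fun i _ => by rw [mul_assoc, hba, mul_zero]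
  have hh_mem : h ∈ TwoSidedIdeal.span {a 0} :=
    sum_mem fun i _ => TwoSidedIdeal.mul_mem_left _ _ _ (hb_span i)
  refine ⟨g * (1 - cutoff d 0 h), hfam.isFull.mul_one_sub_cutoff (hga 0) hd hh hha hh_mem,
    dvd_mul_right _ _, fun i => cutoff d 1 h * b i, hb.mul_left isSelfAdjoint_cutoff hcomm,
    fun i => ?_, fun i => by rw [mul_assoc, hbg], fun i => ?_⟩
  · dsimp only
    rw [(hcomm i).eq]
    exact hdJ i
  · calc cutoff d 1 h * b i * (g * (1 - cutoff d 0 h))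
        = cutoff d 1 h * (b i * g) * (1 - cutoff d 0 h) := by simp only [mul_assoc]
      _ = b i * (cutoff d 1 h - cutoff d 1 h * cutoff d 0 h) := by
          rw [hbg, (hcomm i).eq, mul_assoc, mul_sub, mul_one]
      _ = 0 := by rw [cutoff_mul_cutoff_of_gt hd zero_lt_one, sub_self, mul_zero]

lemma IsOrthogonalFamily.unitary_conj {ι : Type*} {b : ι → A} (hb : IsOrthogonalFamily b) {u : A}
    (hu : u ∈ unitary A) : IsOrthogonalFamily fun i => u * b i * star u where
  isSelfAdjoint i := (hb.isSelfAdjoint i).conjugate u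
  pairwise_mul_eq_zero i j hij := by
    calc u * b i * star u * (u * b j * star u)
        = u * (b i * (star u * u) * b j) * star u := by simp only [mul_assoc]
      _ = 0 := by
        rw [Unitary.star_mul_self_of_mem hu, mul_one, hb.pairwise_mul_eq_zero hij, mul_zero,
          zero_mul]

lemma unitary_conj_mem_iff {J : TwoSidedIdeal A} {u x : A} (hu : u ∈ unitary A) :
    u * x * star u ∈ J ↔ x ∈ J := by
  refine ⟨fun hx => ?_, fun hx => J.mul_mem_right _ _ (J.mul_mem_left _ _ hx)⟩
  have hconj : star u * (u * x * star u) * u = x := by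
    calc star u * (u * x * star u) * u = (star u * u) * x * (star u * u) := by
          simp only [mul_assoc]
      _ = x := by rw [Unitary.star_mul_self_of_mem hu, one_mul, mul_one]
  exact hconj ▸ J.mul_mem_right _ _ (J.mul_mem_left _ _ hx)

variable (hA : Dense {a : A | IsUnit a})
include hA

lemma exists_isFull_hasOrthogonalFamiliesIn {g e γ : A} {n : ℕ} (hg : IsSelfAdjoint g)
    (he : IsSelfAdjoint e) (hγ : IsSelfAdjoint γ) (hγe : γ * e = e) (hγg : γ * g = 0)
    (hfam : HasOrthogonalFamiliesIn {x | x * g = x} (n + 1)) :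
    ∃ c, IsSelfAdjoint c ∧ IsFull c ∧ g ∣ c ∧
      HasOrthogonalFamiliesIn {x | x * c = 0 ∧ ∀ z, e * z = z → x * z = 0} n := by
  have hlocal (J : {J : TwoSidedIdeal A // IsCoatom J}) :=
    exists_isFull_and_isOrthogonalFamily hg hfam J.2
  choose r hr hgr b hb hbJ hbg hbr using hlocal
  obtain ⟨F, hF⟩ := exists_finset_forall_notMem b hbJ
  have hγr (J) : γ * r J = 0 := by
    obtain ⟨w, hw⟩ := hgr J
    rw [hw, ← mul_assoc, hγg, zero_mul]
  obtain ⟨c, hc_sa, hc, hgc, hconj⟩ := exists_isFull_forall_dvd_unitary_conj hA F hγ he hγe hg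
    hfam.isFull (fun J _ => hr J) hγg fun J _ => hγr J
  refine ⟨c, hc_sa, hc, hgc, fun J' hJ' => ?_⟩
  obtain ⟨J, hJF, hJ⟩ := hF J' hJ'
  obtain ⟨u, hu, hue, v, hv⟩ := hconj J hJF
  refine ⟨fun i => u * b J i * star u, (hb J).unitary_conj hu, fun i => ⟨?_, fun z hz => ?_⟩,
    fun i hi => hJ i ((unitary_conj_mem_iff hu).1 hi)⟩
  · calc u * b J i * star u * c
        = u * b J i * star u * c * (u * star u) := by
          rw [Unitary.mul_star_self_of_mem hu, mul_one]
      _ = u * (b J i * (star u * c * u)) * star u := by simp only [mul_assoc]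
      _ = 0 := by rw [hv, ← mul_assoc (b J i), hbr, zero_mul, mul_zero, zero_mul]
  · have hgz : g * z = 0 := by
      rw [← hz, ← hγe, ← mul_assoc, ← mul_assoc, mul_eq_zero_symm hγ hg hγg, zero_mul, zero_mul]
    calc u * b J i * star u * z
        = u * b J i * ((star u * u) * z) := by rw [← hue z hz]; simp only [mul_assoc, hue z hz]
      _ = u * (b J i * (g * z)) := by
          rw [Unitary.star_mul_self_of_mem hu, one_mul, ← mul_assoc (b J i), hbg, mul_assoc]
      _ = 0 := by rw [hgz, mul_zero, mul_zero]

/- The old elements are shrunk to `e₃ c i`, so that the unitaries produced by stable rank one,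
which fix the range of `e₂`, do not move them. -/
lemma exists_isOrthogonalFamily_succ {m n : ℕ} {c : Fin m → A} (hc : IsOrthogonalFamily c)
    (hc_full : ∀ i, IsFull (c i)) (hfam : HasOrthogonalFamiliesIn {x | ∀ i, x * c i = 0} (n + 1)) :
    ∃ c' : Fin (m + 1) → A, IsOrthogonalFamily c' ∧ (∀ i, IsFull (c' i)) ∧
      HasOrthogonalFamiliesIn {x | ∀ i, x * c' i = 0} n := by
  set h := ∑ i, star (c i) * c i
  have hh : IsSelfAdjoint h := isSelfAdjoint_sum _ fun i _ => .star_mul_self _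
  have hev (i) : ∀ᶠ d in 𝓝[>] 0, IsFull (c i * cutoff d 3 h) :=
    (tendsto_mul_cutoff_sum c i 3).eventually (isOpen_setOf_isFull.mem_nhds (hc_full i))
  obtain ⟨d, hd, hd_full⟩ := ((eventually_mem_nhdsWithin (s := Set.Ioi 0)).and
    (eventually_all.2 hev)).exists
  have hcomm (i) : Commute (cutoff d 3 h) (c i) :=
    commute_cutoff (hc.commute_sum_star_mul_self i)
  have hg_sub : HasOrthogonalFamiliesIn {x | x * (1 - cutoff d 0 h) = x} (n + 1) := by
    refine hfam.mono fun x hx => ?_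
    have hxh : x * h = 0 := by
      rw [Finset.mul_sum]
      exact Finset.sum_eq_zero fun i _ => by
        rw [(hc.isSelfAdjoint i).star_eq, ← mul_assoc, hx i, zero_mul]
    rw [Set.mem_ofPred_eq, mul_sub, mul_one, mul_cutoff_eq_zero hd hh hxh, sub_zero]
  have hγg : cutoff d 1 h * (1 - cutoff d 0 h) = 0 := by
    rw [mul_sub, mul_one, cutoff_mul_cutoff_of_gt hd zero_lt_one, sub_self]
  obtain ⟨c₀, hc₀_sa, hc₀, ⟨w, hw⟩, hfam'⟩ := exists_isFull_hasOrthogonalFamiliesIn hA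
    ((IsSelfAdjoint.one A).sub isSelfAdjoint_cutoff) isSelfAdjoint_cutoff isSelfAdjoint_cutoff
    (cutoff_mul_cutoff_of_lt hd one_lt_two) hγg hg_sub
  have hc₀c (i) : c₀ * (cutoff d 3 h * c i) = 0 := by
    rw [← hc₀_sa.star_eq, hw, star_mul, star_sub, star_one, isSelfAdjoint_cutoff.star_eq,
      mul_assoc, ← mul_assoc (1 - _), sub_mul, one_mul, cutoff_mul_cutoff_of_lt hd three_pos,
      sub_self, zero_mul, mul_zero]
  refine ⟨Fin.cons c₀ fun i => cutoff d 3 h * c i,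
    (hc.mul_left isSelfAdjoint_cutoff hcomm).cons hc₀_sa hc₀c, Fin.cases hc₀ fun i => ?_,
    hfam'.mono fun x hx => Fin.cases hx.1 fun i => hx.2 _ ?_⟩
  · simpa only [Fin.cons_succ, (hcomm i).eq] using hd_full i
  · rw [Fin.cons_succ, ← mul_assoc, cutoff_mul_cutoff_of_lt hd (Nat.lt_succ_self 2)]

lemma exists_isFull_isOrthogonalFamily {k : ℕ}
    (hk : ∀ J : TwoSidedIdeal A, IsCoatom J → HasOrthogonalFamily J k) :
    ∃ c : Fin k → A, IsOrthogonalFamily c ∧ ∀ i, IsFull (c i) := by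
  suffices hmn : ∀ m n, m + n = k → ∃ c : Fin m → A, IsOrthogonalFamily c ∧ (∀ i, IsFull (c i)) ∧
      HasOrthogonalFamiliesIn {x | ∀ i, x * c i = 0} n by
    obtain ⟨c, hc, hc_full, -⟩ := hmn k 0 rfl
    exact ⟨c, hc, hc_full⟩
  intro m
  induction m with
  | zero =>
    rintro n rfl
    refine ⟨Fin.elim0, ⟨fun i => i.elim0, fun i => i.elim0⟩, fun i => i.elim0, fun J hJ => ?_⟩
    obtain ⟨a, ha, haJ⟩ : HasOrthogonalFamily J n := zero_add n ▸ hk J hJ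
    exact ⟨a, ha, fun _ i => i.elim0, haJ⟩
  | succ m ih =>
    intro n hmn
    obtain ⟨c, hc, hc_full, hfam⟩ := ih (n + 1) (by omega)
    exact exists_isOrthogonalFamily_succ hA hc hc_full hfam

lemma exists_isFull_forall_star_mul_eq {k : ℕ}
    (hk : ∀ J : TwoSidedIdeal A, IsCoatom J → HasOrthogonalFamily J k) :
    ∃ (c : A) (y : Fin k → A), IsFull c ∧
      ∀ i j, star (y i) * y j = if i = j then star c * c else 0 := by
  obtain ⟨x, hx, hx_full⟩ := exists_isFull_isOrthogonalFamily hA hk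
  obtain ⟨c, hc_sa, hc, -, hconj⟩ := exists_isFull_forall_dvd_unitary_conj hA Finset.univ
    (IsSelfAdjoint.zero A) (.zero A) (mul_zero 0) (.one A) isFull_one (fun i _ => hx_full i)
    (zero_mul 1) fun i _ => zero_mul (x i)
  have hconj (i) := hconj i (Finset.mem_univ i)
  choose u hu _ w hw using hconj
  have hw' (i) : star (u i) * c * u i = star (w i) * x i := by
    simpa [hc_sa.star_eq, (hx.isSelfAdjoint i).star_eq, mul_assoc] using congrArg star (hw i)
  refine ⟨c, fun i => star (u i) * c, hc, fun i j => ?_⟩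
  have hy : star (star (u i) * c) * (star (u j) * c) = c * (u i * star (u j)) * c := by
    rw [star_mul, star_star, hc_sa.star_eq]; simp only [mul_assoc]
  rw [hy]
  split_ifs with hij
  · rw [hij, Unitary.mul_star_self_of_mem (hu j), mul_one, hc_sa.star_eq]
  · calc c * (u i * star (u j)) * c
        = (u i * star (u i)) * (c * (u i * star (u j)) * c) * (u j * star (u j)) := by
          rw [Unitary.mul_star_self_of_mem (hu i), Unitary.mul_star_self_of_mem (hu j), one_mul,
            mul_one]
      _ = u i * ((star (u i) * c * u i) * (star (u j) * c * u j)) * star (u j) := by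
          simp only [mul_assoc]
      _ = u i * (star (w i) * (x i * x j) * w j) * star (u j) := by
          rw [hw', hw]; simp only [mul_assoc]
      _ = 0 := by rw [hx.pairwise_mul_eq_zero hij, mul_zero, zero_mul, mul_zero, zero_mul]

end FullOrthogonalFamily

section Cone

/-- The extension of `f ∈ C₀((0,1])` to `ℝ` by `0` on the left and by `f 1` on the right. -/
noncomputable def coneExtend (f : C₀(Set.Ioc (0 : ℝ) 1, ℂ)) (t : ℝ) : ℂ :=
  if ht : 0 < t then f ⟨min t 1, lt_min ht one_pos, min_le_right _ _⟩ else 0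

variable {f : C₀(Set.Ioc (0 : ℝ) 1, ℂ)} {t : ℝ}

lemma coneExtend_of_nonpos (ht : t ≤ 0) : coneExtend f t = 0 := dif_neg ht.not_gt

lemma tendsto_coneExtend_nhds_of_nonpos (ht : t ≤ 0) : Tendsto (coneExtend f) (𝓝 t) (𝓝 0) := by
  refine tendsto_def.2 fun U hU => ?_
  obtain ⟨K, hK, hKU⟩ := mem_cocompact.1 (zero_at_infty f hU)
  have hK_closed : IsClosed ((↑) '' K : Set ℝ) := (hK.image continuous_subtype_val).isClosed
  have ht_notMem : max 0 (min t 1) ∉ ((↑) '' K : Set ℝ) := by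
    rintro ⟨x, -, hx⟩
    rw [max_eq_left ((min_le_left t 1).trans ht)] at hx
    exact x.2.1.ne' hx
  have hcont : Continuous fun s : ℝ => max 0 (min s 1) := by fun_prop
  filter_upwards [(hK_closed.isOpen_compl.preimage hcont).mem_nhds ht_notMem] with s hs
  rw [Set.mem_preimage, coneExtend]
  split_ifs with hs0
  · refine hKU fun hsK => hs ⟨_, hsK, ?_⟩
    exact (max_eq_right (lt_min hs0 one_pos).le).symm
  · exact mem_of_mem_nhds hU

@[fun_prop]
lemma continuous_coneExtend : Continuous (coneExtend f) := by
  refine continuous_iff_continuousAt.2 fun t => ?_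
  obtain ht | ht := lt_or_ge 0 t
  · have hon : ContinuousOn (coneExtend f) (Set.Ioi 0) := by
      rw [continuousOn_iff_continuous_domRestrict]
      have hrestrict : (Set.Ioi (0 : ℝ)).domRestrict (coneExtend f) =
          fun s : Set.Ioi (0 : ℝ) => f ⟨min s 1, lt_min s.2 one_pos, min_le_right _ _⟩ :=
        funext fun s => dif_pos s.2
      rw [hrestrict]
      fun_prop
    exact hon.continuousAt (Ioi_mem_nhds ht)
  · rw [ContinuousAt, coneExtend_of_nonpos ht]
    exact tendsto_coneExtend_nhds_of_nonpos ht

lemma tendsto_coe_cocompact_Ioc {a b : ℝ} :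
    Tendsto ((↑) : Set.Ioc a b → ℝ) (cocompact (Set.Ioc a b)) (𝓝 a) := by
  refine tendsto_order.2 ⟨fun c hc => .of_forall fun x => hc.trans x.2.1, fun c hc => ?_⟩
  refine mem_cocompact.2 ⟨(↑) ⁻¹' Set.Icc c b, ?_, fun x hx => ?_⟩
  · refine (IsInducing.subtypeVal.isCompact_preimage_iff fun x hx => ?_).2 isCompact_Icc
    exact ⟨⟨x, hc.trans_le hx.1, hx.2⟩, rfl⟩
  · exact lt_of_not_ge fun hcx => hx ⟨hcx, x.2.2⟩

/-- The inclusion `(0,1] → ℂ`, a generator of the C⋆-algebra `C₀((0,1])`. -/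
noncomputable def coneId : C₀(Set.Ioc (0 : ℝ) 1, ℂ) where
  toFun x := (x : ℝ)
  continuous_toFun := by fun_prop
  zero_at_infty' := (Complex.continuous_ofReal.tendsto 0).comp tendsto_coe_cocompact_Ioc

lemma coneExtend_coneId (ht0 : 0 ≤ t) (ht1 : t ≤ 1) : coneExtend coneId t = t := by
  obtain rfl | ht0 := ht0.eq_or_lt
  · simp [coneExtend]
  · simp [coneExtend, coneId, ht0, ht1]

variable {A : Type*} [CStarAlgebra A]

/-- The homomorphism `f ↦ f (e₁)` with `e₁ = cutoff d 1 h` for a self-adjoint `h`. -/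
noncomputable def coneHom (d : ℝ) (h : A) : C₀(Set.Ioc (0 : ℝ) 1, ℂ) →⋆ₙₐ[ℂ] A where
  toFun f := cfc (fun z : ℂ => coneExtend f (ramp d 1 z.re)) h
  map_smul' c f := by
    rw [MonoidHom.id_apply, ← cfc_smul ..]
    congr! 2 with z
    simp only [coneExtend]
    split_ifs <;> simp
  map_zero' := by simp [coneExtend]
  map_add' f g := by
    rw [← cfc_add ..]
    congr! 2 with z
    simp only [coneExtend]
    split_ifs <;> simp
  map_mul' f g := by
    rw [← cfc_mul ..]
    congr! 2 with z
    simp only [coneExtend]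
    split_ifs <;> simp
  map_star' f := by
    rw [← cfc_star]
    congr! 2 with z
    simp only [coneExtend]
    split_ifs <;> simp

variable {d : ℝ} {h : A}

lemma coneHom_coneId (hh : IsSelfAdjoint h) : coneHom d h coneId = cutoff d 1 h := by
  rw [cutoff, cfc_real_eq_complex _ hh]
  exact cfc_congr fun z _ => coneExtend_coneId ramp_nonneg ramp_le_one

lemma cutoff_mul_coneHom (hd : 0 < d) (hh : IsSelfAdjoint h) (f : C₀(Set.Ioc (0 : ℝ) 1, ℂ)) :
    cutoff d 0 h * coneHom d h f = coneHom d h f := by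
  change _ * cfc _ h = cfc _ h
  rw [cutoff, cfc_real_eq_complex _ hh, ← cfc_mul ..]
  refine cfc_congr fun z _ => ?_
  obtain hz | hz := eq_or_ne (ramp d 1 z.re) 0
  · simp [hz, coneExtend]
  · have hz0 : ramp d 0 z.re = 1 := by simpa [hz] using ramp_mul_ramp (t := z.re) hd zero_lt_one
    simp [hz0]

lemma truncInvSqrt_mul_mul_truncInvSqrt_mul_coneHom (hd : 0 < d) (hh : IsSelfAdjoint h)
    (f : C₀(Set.Ioc (0 : ℝ) 1, ℂ)) :
    truncInvSqrt d h * h * truncInvSqrt d h * coneHom d h f = coneHom d h f := by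
  rw [← cutoff_mul_coneHom hd hh, ← mul_assoc, truncInvSqrt_mul_mul_truncInvSqrt_mul_cutoff hd hh]

end Cone

section MatrixHom

variable {S A B n : Type*} [CommSemiring S] [NonUnitalSemiring A] [StarRing A] [Module S A]
  [IsScalarTower S A A] [SMulCommClass S A A] [NonUnitalSemiring B] [StarRing B] [Module S B]
  [Fintype n] [DecidableEq n]

/-- The homomorphism on matrices over `B` induced by a homomorphism `ψ` on `B` and elements `t i`
that behave like isometries with orthogonal ranges on the range of `ψ`. -/
def matrixHom (ψ : B →⋆ₙₐ[S] A) (t : n → A)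
    (ht : ∀ i j b, star (t i) * t j * ψ b = if i = j then ψ b else 0) :
    Matrix n n B →⋆ₙₐ[S] A where
  toFun M := ∑ i, ∑ j, t i * ψ (M i j) * star (t j)
  map_smul' c M := by
    simp only [Matrix.smul_apply, map_smul, mul_smul_comm, smul_mul_assoc, Finset.smul_sum,
      MonoidHom.id_apply]
  map_zero' := by simp
  map_add' M N := by simp [mul_add, add_mul, Finset.sum_add_distrib]
  map_mul' M N := by
    have hmul (i j l p) : t i * ψ (M i j) * star (t j) * (t l * ψ (N l p) * star (t p)) =
        if j = l then t i * ψ (M i j * N l p) * star (t p) else 0 := by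
      calc t i * ψ (M i j) * star (t j) * (t l * ψ (N l p) * star (t p))
          = t i * ψ (M i j) * (star (t j) * t l * ψ (N l p)) * star (t p) := by
            simp only [mul_assoc]
        _ = if j = l then t i * ψ (M i j * N l p) * star (t p) else 0 := by
            rw [ht]; split_ifs <;> simp [mul_assoc]
    simp only [Matrix.mul_apply, map_sum, Finset.mul_sum, Finset.sum_mul, hmul, Finset.sum_ite_eq',
      Finset.mem_univ, if_true]
    rw [Finset.sum_comm_cycle]
    exact Finset.sum_congr rfl fun l _ => Finset.sum_comm
  map_star' M := by
    simp only [star_sum, star_mul, star_star, ← map_star, Matrix.star_apply, ← mul_assoc]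
    exact Finset.sum_comm

lemma matrixHom_single (ψ : B →⋆ₙₐ[S] A) {t : n → A}
    (ht : ∀ i j b, star (t i) * t j * ψ b = if i = j then ψ b else 0) (i j : n) (b : B) :
    matrixHom ψ t ht (Matrix.single i j b) = t i * ψ b * star (t j) := by
  change ∑ k, ∑ l, t k * ψ (Matrix.single i j b k l) * star (t l) = _
  simp [Matrix.single_apply, ite_and, apply_ite ψ]

lemma map_mem_span_range_matrixHom {A : Type*} [NonUnitalRing A] [StarRing A] [Module S A]
    [IsScalarTower S A A] [SMulCommClass S A A] {ψ : B →⋆ₙₐ[S] A} {t : n → A}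
    {ht : ∀ i j b, star (t i) * t j * ψ b = if i = j then ψ b else 0} (i : n) (b : B) :
    ψ b ∈ TwoSidedIdeal.span (Set.range (matrixHom ψ t ht)) := by
  have hleft (b) : star (t i) * t i * ψ b = ψ b := by simp [ht]
  have hright : ψ b * (star (t i) * t i) = ψ b := by
    simpa [map_star] using congr_arg star (hleft (star b))
  have hconj : star (t i) * matrixHom ψ t ht (Matrix.single i i b) * t i = ψ b := by
    calc star (t i) * matrixHom ψ t ht (Matrix.single i i b) * t i
        = star (t i) * t i * ψ b * (star (t i) * t i) := by
          rw [matrixHom_single]; simp only [mul_assoc]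
      _ = ψ b := by rw [hleft, hright]
  rw [← hconj]
  exact TwoSidedIdeal.mul_mem_right _ _ _ (TwoSidedIdeal.mul_mem_left _ _ _
    (TwoSidedIdeal.subset_span (Set.mem_range_self _)))

end MatrixHom

section StableRankOne

variable {A : Type*} [CStarAlgebra A]

lemma exists_matrixConeHom_span_range_eq_top (hA : Dense {a : A | IsUnit a}) {k : ℕ} (hk : 1 ≤ k)
    (hfam : ∀ J : TwoSidedIdeal A, IsCoatom J → HasOrthogonalFamily J k) :
    ∃ φ : Matrix (Fin k) (Fin k) C₀(Set.Ioc (0 : ℝ) 1, ℂ) →⋆ₙₐ[ℂ] A,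
      TwoSidedIdeal.span (Set.range φ) = ⊤ := by
  obtain ⟨c, y, hc, hy⟩ := exists_isFull_forall_star_mul_eq hA hfam
  have hh : IsSelfAdjoint (star c * c) := .star_mul_self c
  obtain ⟨d, hd, hcd⟩ := ((eventually_mem_nhdsWithin (s := Set.Ioi 0)).and
    ((tendsto_mul_cutoff c 1).eventually (isOpen_setOf_isFull.mem_nhds hc))).exists
  set h := star c * c
  have hm : star (truncInvSqrt d h) = truncInvSqrt d h := isSelfAdjoint_truncInvSqrt.star_eq
  have ht (i j f) : star (y i * truncInvSqrt d h) * (y j * truncInvSqrt d h) * coneHom d h f =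
      if i = j then coneHom d h f else 0 := by
    calc star (y i * truncInvSqrt d h) * (y j * truncInvSqrt d h) * coneHom d h f
        = truncInvSqrt d h * (star (y i) * y j) * truncInvSqrt d h * coneHom d h f := by
          rw [star_mul, hm]; simp only [mul_assoc]
      _ = if i = j then coneHom d h f else 0 := by
          rw [hy]
          split_ifs
          · exact truncInvSqrt_mul_mul_truncInvSqrt_mul_coneHom hd hh f
          · simp
  refine ⟨matrixHom (coneHom d h) _ ht, top_le_iff.1 ?_⟩
  rw [← hcd.of_mul_left, ← coneHom_coneId hh, TwoSidedIdeal.span_le, Set.singleton_subset_iff]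
  exact map_mem_span_range_matrixHom ⟨0, hk⟩ coneId

end StableRankOne

section FiniteDimensional

variable {m n : Type*} [Fintype m] [Fintype n]

lemma card_le_card_of_pairwise_star_mul_eq_zero {s : n → Matrix m m ℂ}
    (hs : ∀ i, s i ≠ 0) (hss : Pairwise fun i j => star (s i) * s j = 0) :
    Fintype.card n ≤ Fintype.card m := by
  classical
  have hne (i) : ∃ w, (s i).mulVec w ≠ 0 := by
    by_contra! hw
    exact hs i (Matrix.ext_of_mulVec_single fun j => by rw [hw, Matrix.zero_mulVec])
  choose w hw using hne
  have hli : LinearIndependent ℂ fun i => WithLp.toLp 2 ((s i).mulVec (w i)) := by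
    refine linearIndependent_of_ne_zero_of_inner_eq_zero (fun i => by simpa using hw i)
      fun i j hij => ?_
    dsimp only
    rw [EuclideanSpace.inner_toLp_toLp, Matrix.star_mulVec, dotProduct_comm,
      ← Matrix.dotProduct_mulVec, Matrix.mulVec_mulVec, ← Matrix.star_eq_conjTranspose, hss hij]
    simp
  simpa using hli.fintype_card_le_finrank

variable {B : Type*} [NonUnitalSemiring B] [StarRing B] [Module ℂ B]

open ComplexOrder in
lemma map_eq_zero_of_card_lt (hmn : Fintype.card m < Fintype.card n)
    (θ : Matrix n n B →⋆ₙₐ[ℂ] Matrix m m ℂ) (x : Matrix n n B) : θ x = 0 := by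
  classical
  have hmul (i j l b) : star (θ (Matrix.single i l b)) * θ (Matrix.single j l b) =
      θ (Matrix.single l i (star b) * Matrix.single j l b) := by
    rw [← map_star, ← map_mul, Matrix.star_eq_conjTranspose, Matrix.conjTranspose_single]
  have hsingle (i l b) : θ (Matrix.single i l b) = 0 := by
    by_contra hi
    have hne (j) : θ (Matrix.single j l b) ≠ 0 := fun hj => hi <| by
      refine Matrix.conjTranspose_mul_self_eq_zero.1 ?_
      rw [← Matrix.star_eq_conjTranspose, hmul, Matrix.single_mul_single_same,
        ← Matrix.single_mul_single_same (j := j), ← hmul, hj, mul_zero]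
    refine hmn.not_ge (card_le_card_of_pairwise_star_mul_eq_zero hne fun j j' hjj' => ?_)
    simp only [hmul, Matrix.single_mul_single_of_ne _ _ _ _ hjj', map_zero]
  rw [Matrix.matrix_eq_sum_single x]
  simp [map_sum, hsingle]

open scoped Matrix.Norms.L2Operator CStarAlgebra in
lemma isClosed_ker {A : Type*} [CStarAlgebra A] (π : A →⋆ₙₐ[ℂ] Matrix m m ℂ) :
    IsClosed (TwoSidedIdeal.ker π : Set A) := by
  classical
  have hker : (TwoSidedIdeal.ker π : Set A) = π ⁻¹' {0} := Set.ext fun x => TwoSidedIdeal.mem_ker π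
  rw [hker]
  exact isClosed_singleton.preimage (map_continuous π)

end FiniteDimensional

end GlimmHalving

/-- **Global Glimm halving for unital C*-algebras of stable rank one (nonseparable case).**
A unital C*-algebra `A` of stable rank one has no nonzero representation of
dimension less than `k` if and only if there is a *-homomorphism from
`M_k(C₀((0,1]))` into `A` with full range. -/
theorem glimm_halving_unital_stableRankOne
    {A : Type*} [CStarAlgebra A]
    (hsr1 : Dense {a : A | IsUnit a})
    (k : ℕ) (hk : 1 ≤ k) :
    (∀ (j : ℕ), 1 ≤ j → j < k →
        ∀ φ : A →⋆ₙₐ[ℂ] Matrix (Fin j) (Fin j) ℂ, ∀ a : A, φ a = 0) ↔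
      ∃ φ : Matrix (Fin k) (Fin k) C₀(↥(Set.Ioc (0:ℝ) 1), ℂ) →⋆ₙₐ[ℂ] A,
        ∀ I : TwoSidedIdeal A, IsClosed (I : Set A) →
          (∀ x, φ x ∈ I) → ∀ a : A, a ∈ I := by
  constructor
  · intro hrep
    have hfam (J : TwoSidedIdeal A) (hJ : IsCoatom J) : GlimmHalving.HasOrthogonalFamily J k :=
      GlimmHalving.hasOrthogonalFamily_of_forall_map_one_eq_zero hJ fun j hj hjk φ =>
        hrep j hj hjk φ 1
    obtain ⟨φ, hφ⟩ := GlimmHalving.exists_matrixConeHom_span_range_eq_top hsr1 hk hfam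
    refine ⟨φ, fun I _ hφI a => ?_⟩
    have hspan : TwoSidedIdeal.span (Set.range φ) ≤ I :=
      TwoSidedIdeal.span_le.2 (Set.range_subset_iff.2 hφI)
    exact hspan (hφ ▸ TwoSidedIdeal.mem_top A)
  · rintro ⟨φ, hφ⟩ j - hjk π a
    have hcomp (x) : π (φ x) = 0 :=
      GlimmHalving.map_eq_zero_of_card_lt (by simpa using hjk) (π.comp φ) x
    exact (TwoSidedIdeal.mem_ker π).1 (hφ _ (GlimmHalving.isClosed_ker π)
      (fun x => (TwoSidedIdeal.mem_ker π).2 (hcomp x)) a)
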